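/- arXiv:1409.3666 — 2 statements merged into one kernel-verified Lean document; each statement's English description precedes it below -/
import Mathlib

section
/- For every integer b ≥ 2 and every t ∈ ℕ₀, there exists a constant C > 0 (depending only on b and t) with the following property: for all m, n ∈ ℕ with t ≤ m ≤ n and all n×m matrices C₁, C₂ over Z_b whose dual net P⊥ satisfies μ₁(k₁) + μ₁(k₂) > m − t for every (k₁, k₂) ∈ P⊥ with (k₁, k₂) ≠ (0, 0), the two-dimensional digital net P generated by C₁, C₂ satisfies L_∞(P) ≤ C·m / b^m. -/
open MeasureTheory
open scoped BigOperators

/-- The point of the two-dimensional digital net over `ZMod b` with generating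
matrices `C₁, C₂` indexed by `(a₁, ..., a_m) ∈ {0, ..., b-1}^m`. -/
noncomputable def digitalNetPoint (b m n : ℕ) (C1 C2 : Matrix (Fin n) (Fin m) (ZMod b))
    (a : Fin m → Fin b) : ℝ × ℝ :=
  (∑ i : Fin n, ((Matrix.mulVec C1 (fun j => ((a j : ℕ) : ZMod b)) i).val : ℝ) /
      (b : ℝ) ^ ((i : ℕ) + 1),
   ∑ i : Fin n, ((Matrix.mulVec C2 (fun j => ((a j : ℕ) : ZMod b)) i).val : ℝ) /
      (b : ℝ) ^ ((i : ℕ) + 1))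

/-- Local discrepancy function of the finite point family `P` (indexed by a fintype,
so that points are counted with multiplicity) at `y`. -/
noncomputable def discAt {ι : Type} [Fintype ι] (P : ι → ℝ × ℝ) (y : ℝ × ℝ) : ℝ :=
  ((Finset.univ.filter (fun i => (P i).1 < y.1 ∧ (P i).2 < y.2)).card : ℝ) /
    (Fintype.card ι : ℝ) - y.1 * y.2

/-- `L_∞` discrepancy of the finite point family `P`. -/
noncomputable def LinfDisc {ι : Type} [Fintype ι] (P : ι → ℝ × ℝ) : ℝ :=
  ⨆ y : ((Set.Ico (0:ℝ) 1) ×ˢ (Set.Ico (0:ℝ) 1) : Set (ℝ × ℝ)), |discAt P (y : ℝ × ℝ)|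

/-- The vector of the first `n` base-`b` digits of `k ∈ ℕ` (least significant first),
viewed in `ZMod b`. -/
def digitVec (b n k : ℕ) : Fin n → ZMod b := fun i => (((k / b ^ (i : ℕ)) % b : ℕ) : ZMod b)

/-- The NRT weight `μ₁(k)`: the largest index `i ≥ 1` such that the `i`-th base-`b`
digit of `k` is nonzero, and `μ₁(0) = 0`. -/
def mu1 (b k : ℕ) : ℕ := if k = 0 then 0 else Nat.log b k + 1

/-!
The condition on the dual net says that, for `i + j = d := m - t`, the first `i` rows of `C₁` and
the first `j` rows of `C₂` are together linearly independent. By orthogonality of the additive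
characters of `ZMod b`, every prescription of the first `i` and `j` digits of the two coordinates is
then met by the same number of points, so every elementary interval of volume `b ^ (-d)` contains
its exact share of points.

Fix the height `y` of a box `[0, x) × [0, y)`. A strip of width `b ^ (-i)` below height `y` lies
between two unions of elementary intervals that differ by a single one, so its discrepancy is at
most `b ^ (-d)`. Expanding `x` in base `b`, the box is cut into at most `b - 1` such strips for each
of the `d` leading digits, and a remainder contained in one more strip.
-/

open scoped Finset Matrix

section CharacterSums

variable {R R' : Type*} [CommRing R] [Fintype R] [DecidableEq R] [CommRing R'] [IsDomain R']
  {ψ : AddChar R R'} {κ ν : Type*} [Fintype κ] [Fintype ν]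

theorem sum_addChar_dotProduct [DecidableEq κ] (hψ : ψ.IsPrimitive) (z : κ → R) :
    ∑ u : κ → R, ψ (u ⬝ᵥ z) = if z = 0 then (Fintype.card (κ → R) : R') else 0 := by
  classical
  let χ : AddChar (κ → R) R' :=
    ψ.compAddMonoidHom ((dotProductBilin R R).flip z).toAddMonoidHom
  have χ_eq_zero_iff : χ = 0 ↔ z = 0 := by
    refine ⟨fun hχ ↦ ?_, fun hz ↦ ?_⟩
    · by_contra hz
      obtain ⟨i, hi⟩ := Function.ne_iff.mp hz
      refine hψ hi (DFunLike.ext _ _ fun r ↦ ?_)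
      have := DFunLike.congr_fun hχ (Pi.single i r)
      simpa [χ, mul_comm] using this
    · ext u
      simp [χ, hz]
  calc ∑ u : κ → R, ψ (u ⬝ᵥ z) = ∑ u, χ u := rfl
    _ = if z = 0 then (Fintype.card (κ → R) : R') else 0 := by
      simp only [AddChar.sum_eq_ite, χ_eq_zero_iff]

theorem sum_addChar_dotProduct_mulVec_sub [DecidableEq ν] (hψ : ψ.IsPrimitive)
    {A : Matrix κ ν R} (hA : Function.Injective Aᵀ.mulVec) (y u : κ → R) :
    ∑ x : ν → R, ψ (u ⬝ᵥ (A *ᵥ x - y)) = if u = 0 then (Fintype.card (ν → R) : R') else 0 := by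
  have split (x : ν → R) : ψ (u ⬝ᵥ (A *ᵥ x - y)) = ψ (-(u ⬝ᵥ y)) * ψ (x ⬝ᵥ Aᵀ *ᵥ u) := by
    rw [← AddChar.map_add_eq_mul, dotProduct_sub, Matrix.dotProduct_mulVec,
      Matrix.mulVec_transpose, dotProduct_comm x, neg_add_eq_sub]
  have transpose_mulVec_eq_zero : Aᵀ *ᵥ u = 0 ↔ u = 0 := by
    rw [← hA.eq_iff, Matrix.mulVec_zero]
  simp only [split, ← Finset.mul_sum, sum_addChar_dotProduct hψ, transpose_mulVec_eq_zero]
  split_ifs with hu <;> simp [hu]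

theorem card_mulVec_eq_mul_card [DecidableEq κ] [DecidableEq ν] [CharZero R']
    (hψ : ψ.IsPrimitive) {A : Matrix κ ν R} (hA : Function.Injective Aᵀ.mulVec) (y : κ → R) :
    #{x | A *ᵥ x = y} * Fintype.card (κ → R) = Fintype.card (ν → R) := by
  have double_sum : ∑ x : ν → R, ∑ u : κ → R, ψ (u ⬝ᵥ (A *ᵥ x - y)) =
      (Fintype.card (ν → R) : R') := by
    rw [Finset.sum_comm]
    simp only [sum_addChar_dotProduct_mulVec_sub hψ hA]
    simp
  simp only [sum_addChar_dotProduct hψ, sub_eq_zero] at double_sum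
  rw [← Finset.sum_filter, Finset.sum_const, nsmul_eq_mul] at double_sum
  exact_mod_cast double_sum

end CharacterSums

section Discrepancy

/-- The one-dimensional elementary interval `[c / b ^ i, (c + 1) / b ^ i)` in base `b`. -/
abbrev elementaryInterval (b i c : ℕ) : Set ℝ :=
  Set.Ico ((c : ℝ) / (b : ℝ) ^ i) (((c : ℝ) + 1) / (b : ℝ) ^ i)

theorem mem_elementaryInterval_iff {b : ℕ} [NeZero b] {i c : ℕ} {x : ℝ} (hx : 0 ≤ x) :
    x ∈ elementaryInterval b i c ↔ ⌊x * (b : ℝ) ^ i⌋₊ = c := by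
  have hb : (0 : ℝ) < (b : ℝ) ^ i := pow_pos (Nat.cast_pos.mpr (NeZero.pos b)) i
  rw [Nat.floor_eq_iff (by positivity), Set.mem_Ico, div_le_iff₀ hb, lt_div_iff₀ hb]

theorem floor_mul_pow_lt {b : ℕ} [NeZero b] {x : ℝ} (hx : x ∈ Set.Ico (0 : ℝ) 1) (i : ℕ) :
    ⌊x * (b : ℝ) ^ i⌋₊ < b ^ i := by
  have hb : (0 : ℝ) < b := Nat.cast_pos.mpr (NeZero.pos b)
  rw [Nat.floor_lt (mul_nonneg hx.1 (by positivity)), Nat.cast_pow]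
  exact mul_lt_of_lt_one_left (by positivity) hx.2

variable {ι : Type} [Fintype ι]

/-- A finite family of points is a net of strength `d` in base `b` if every two-dimensional
elementary interval of volume `b ^ (-d)` contains exactly the proportion `b ^ (-d)` of its points.
With `b ^ m` points and `d = m - t` this is a `(t, m, 2)`-net. -/
def IsNet (b d : ℕ) (P : ι → ℝ × ℝ) : Prop :=
  ∀ i j c e : ℕ, i + j = d → c < b ^ i → e < b ^ j →
    #{a | (P a).1 ∈ elementaryInterval b i c ∧ (P a).2 ∈ elementaryInterval b j e} * b ^ d =
      Fintype.card ι

theorem discAt_sub_discAt (P : ι → ℝ × ℝ) {x x' : ℝ} (hx : x ≤ x') (y : ℝ) :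
    discAt P (x', y) - discAt P (x, y) =
      (#{a | (P a).1 ∈ Set.Ico x x' ∧ (P a).2 < y} : ℝ) / Fintype.card ι - (x' - x) * y := by
  classical
  have card_eq : #{a | (P a).1 < x' ∧ (P a).2 < y} =
      #{a | (P a).1 < x ∧ (P a).2 < y} + #{a | (P a).1 ∈ Set.Ico x x' ∧ (P a).2 < y} := by
    rw [← Finset.card_union_of_disjoint]
    · congr 1
      ext a
      simp only [Finset.mem_filter, Finset.mem_univ, true_and, Finset.mem_union, Set.mem_Ico]
      grind
    · exact Finset.disjoint_filter.mpr fun a _ h h' ↦ h.1.not_ge h'.1.1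
  simp only [discAt, card_eq]
  push_cast
  ring

namespace IsNet

variable {b d i j : ℕ} {P : ι → ℝ × ℝ}

theorem card_strip_grid (hP : IsNet b d P) (h0 : ∀ a, 0 ≤ (P a).2) (hij : i + j = d) {c f : ℕ}
    (hc : c < b ^ i) (hf : f ≤ b ^ j) :
    #{a | (P a).1 ∈ elementaryInterval b i c ∧ (P a).2 < (f : ℝ) / (b : ℝ) ^ j} * b ^ d =
      f * Fintype.card ι := by
  classical
  induction f with
  | zero => simp [(h0 _).not_gt]
  | succ f ih =>
    have card_succ :
        #{a | (P a).1 ∈ elementaryInterval b i c ∧ (P a).2 < ((f + 1 : ℕ) : ℝ) / (b : ℝ) ^ j} =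
          #{a | (P a).1 ∈ elementaryInterval b i c ∧ (P a).2 < (f : ℝ) / (b : ℝ) ^ j} +
          #{a | (P a).1 ∈ elementaryInterval b i c ∧ (P a).2 ∈ elementaryInterval b j f} := by
      have hle : (f : ℝ) / (b : ℝ) ^ j ≤ ((f : ℝ) + 1) / (b : ℝ) ^ j := by gcongr; linarith
      rw [← Finset.card_union_of_disjoint]
      · congr 1
        ext a
        simp only [Finset.mem_filter, Finset.mem_univ, true_and, Finset.mem_union, Set.mem_Ico,
          Nat.cast_add, Nat.cast_one]
        grind
      · exact Finset.disjoint_filter.mpr fun a _ h h' ↦ h.2.not_ge h'.2.1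
    rw [card_succ, add_mul, ih (by omega), hP i j c f hij hc hf, Nat.succ_mul]

variable [NeZero b] [Nonempty ι]

theorem proportion_strip_mem_Icc (hP : IsNet b d P) (h0 : ∀ a, 0 ≤ (P a).2) (hij : i + j = d)
    {c : ℕ} (hc : c < b ^ i) {y : ℝ} (hy : y ∈ Set.Ico (0 : ℝ) 1) :
    (#{a | (P a).1 ∈ elementaryInterval b i c ∧ (P a).2 < y} : ℝ) / Fintype.card ι ∈
      Set.Icc ((⌊y * (b : ℝ) ^ j⌋₊ : ℝ) / (b : ℝ) ^ d)
        (((⌊y * (b : ℝ) ^ j⌋₊ : ℝ) + 1) / (b : ℝ) ^ d) := by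
  have hb : (0 : ℝ) < b := Nat.cast_pos.mpr (NeZero.pos b)
  have proportion_grid {f : ℕ} (hf : f ≤ b ^ j) :
      (#{a | (P a).1 ∈ elementaryInterval b i c ∧ (P a).2 < (f : ℝ) / (b : ℝ) ^ j} : ℝ) /
        Fintype.card ι = (f : ℝ) / (b : ℝ) ^ d := by
    rw [div_eq_div_iff (Nat.cast_ne_zero.mpr Fintype.card_ne_zero) (by positivity)]
    exact_mod_cast congrArg (Nat.cast (R := ℝ)) (hP.card_strip_grid h0 hij hc hf)
  have hf := floor_mul_pow_lt (b := b) hy j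
  obtain ⟨hle, hlt⟩ := (mem_elementaryInterval_iff (b := b) (i := j) hy.1).mpr rfl
  constructor
  · rw [← proportion_grid hf.le]
    gcongr
  · rw [← Nat.cast_succ] at hlt
    refine le_of_le_of_eq ?_ ((proportion_grid hf).trans (by rw [Nat.cast_succ]))
    gcongr

theorem abs_discAt_grid_succ_sub_le (hP : IsNet b d P) (h0 : ∀ a, 0 ≤ (P a).2) (hi : i ≤ d)
    {c : ℕ} (hc : c < b ^ i) {y : ℝ} (hy : y ∈ Set.Ico (0 : ℝ) 1) :
    |discAt P (((c : ℝ) + 1) / (b : ℝ) ^ i, y) - discAt P ((c : ℝ) / (b : ℝ) ^ i, y)| ≤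
      1 / (b : ℝ) ^ d := by
  have hb : (0 : ℝ) < b := Nat.cast_pos.mpr (NeZero.pos b)
  obtain ⟨j, rfl⟩ := Nat.exists_eq_add_of_le hi
  obtain ⟨hlower, hupper⟩ := hP.proportion_strip_mem_Icc h0 rfl hc hy
  have area_eq : (((c : ℝ) + 1) / (b : ℝ) ^ i - (c : ℝ) / (b : ℝ) ^ i) * y =
      y * (b : ℝ) ^ j / (b : ℝ) ^ (i + j) := by
    rw [pow_add]
    field_simp
    ring
  rw [discAt_sub_discAt P (by gcongr; linarith), area_eq]
  refine (abs_sub_le_of_le_of_le hlower hupper ?_ ?_).trans_eq (by ring)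
  · gcongr
    exact Nat.floor_le (mul_nonneg hy.1 (by positivity))
  · gcongr
    exact (Nat.lt_floor_add_one _).le

theorem abs_discAt_grid_add_sub_le (hP : IsNet b d P) (h0 : ∀ a, 0 ≤ (P a).2) (hi : i ≤ d)
    {c s : ℕ} (hc : c + s ≤ b ^ i) {y : ℝ} (hy : y ∈ Set.Ico (0 : ℝ) 1) :
    |discAt P (((c + s : ℕ) : ℝ) / (b : ℝ) ^ i, y) - discAt P ((c : ℝ) / (b : ℝ) ^ i, y)| ≤
      s / (b : ℝ) ^ d := by
  have key := dist_le_range_sum_of_dist_le (d := fun _ ↦ 1 / (b : ℝ) ^ d)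
    (f := fun s ↦ discAt P (((c + s : ℕ) : ℝ) / (b : ℝ) ^ i, y)) s fun {k} hk ↦ by
      rw [dist_comm, Real.dist_eq]
      simpa [add_assoc] using
        hP.abs_discAt_grid_succ_sub_le h0 hi (c := c + k) (by omega) hy
  rw [dist_comm, Real.dist_eq] at key
  simpa [div_eq_mul_inv] using key

theorem abs_discAt_grid_le (hP : IsNet b d P) (h0 : ∀ a, 0 ≤ P a) (hi : i ≤ d) {c : ℕ}
    (hc : c < b ^ i) {y : ℝ} (hy : y ∈ Set.Ico (0 : ℝ) 1) :
    |discAt P ((c : ℝ) / (b : ℝ) ^ i, y)| ≤ ((b : ℝ) - 1) * i / (b : ℝ) ^ d := by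
  have hb : (0 : ℝ) < b := Nat.cast_pos.mpr (NeZero.pos b)
  induction i generalizing c with
  | zero =>
    obtain rfl : c = 0 := by simpa using hc
    have hfst (a : ι) : ¬ (P a).1 < 0 := (h0 a).1.not_gt
    simp [discAt, hfst]
  | succ i ih =>
    have hq : c / b < b ^ i := Nat.div_lt_of_lt_mul (by rwa [← pow_succ'])
    have hr : ((c % b : ℕ) : ℝ) ≤ (b : ℝ) - 1 := by
      rw [le_sub_iff_add_le]
      exact_mod_cast Nat.mod_lt c (NeZero.pos b)
    have coarse_point :
        ((b * (c / b) : ℕ) : ℝ) / (b : ℝ) ^ (i + 1) = ((c / b : ℕ) : ℝ) / (b : ℝ) ^ i := by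
      rw [Nat.cast_mul, pow_succ', mul_div_mul_left _ _ hb.ne']
    have hcoarse := ih (by omega) hq
    have hfine := hP.abs_discAt_grid_add_sub_le (fun a ↦ (h0 a).2) hi
      (c := b * (c / b)) (s := c % b) (by rw [Nat.div_add_mod]; exact hc.le) hy
    rw [Nat.div_add_mod, coarse_point] at hfine
    calc |discAt P ((c : ℝ) / (b : ℝ) ^ (i + 1), y)|
        ≤ |discAt P (((c / b : ℕ) : ℝ) / (b : ℝ) ^ i, y)| + ((c % b : ℕ) : ℝ) / (b : ℝ) ^ d := by
          linarith [abs_sub_abs_le_abs_sub (discAt P ((c : ℝ) / (b : ℝ) ^ (i + 1), y))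
            (discAt P (((c / b : ℕ) : ℝ) / (b : ℝ) ^ i, y))]
      _ ≤ ((b : ℝ) - 1) * i / (b : ℝ) ^ d + ((b : ℝ) - 1) / (b : ℝ) ^ d := by gcongr
      _ = ((b : ℝ) - 1) * (i + 1 : ℕ) / (b : ℝ) ^ d := by push_cast; ring

theorem abs_discAt_sub_discAt_floor_le (hP : IsNet b d P) (h0 : ∀ a, 0 ≤ (P a).2) {x y : ℝ}
    (hx : x ∈ Set.Ico (0 : ℝ) 1) (hy : y ∈ Set.Ico (0 : ℝ) 1) :
    |discAt P (x, y) - discAt P ((⌊x * (b : ℝ) ^ d⌋₊ : ℝ) / (b : ℝ) ^ d, y)| ≤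
      1 / (b : ℝ) ^ d := by
  have : (0 : ℝ) < b := Nat.cast_pos.mpr (NeZero.pos b)
  obtain ⟨hle, hlt⟩ := (mem_elementaryInterval_iff (b := b) (i := d) hx.1).mpr rfl
  have hc := floor_mul_pow_lt (b := b) hx d
  have strip_le := (hP.proportion_strip_mem_Icc h0 (add_zero d) hc hy).2
  rw [pow_zero, mul_one, Nat.floor_eq_zero.mpr hy.2, Nat.cast_zero, zero_add] at strip_le
  rw [discAt_sub_discAt P hle]
  refine (abs_sub_le_of_nonneg_of_le (by positivity) (le_trans ?_ strip_le)
    (mul_nonneg (sub_nonneg.mpr hle) hy.1) ?_)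
  · gcongr
    exact Set.Ico_subset_Ico_right hlt.le
  · calc _ ≤ x - (⌊x * (b : ℝ) ^ d⌋₊ : ℝ) / (b : ℝ) ^ d :=
          mul_le_of_le_one_right (sub_nonneg.mpr hle) hy.2.le
      _ ≤ 1 / (b : ℝ) ^ d := by
          rw [add_div] at hlt
          linarith

theorem abs_discAt_le (hP : IsNet b d P) (h0 : ∀ a, 0 ≤ P a) {x y : ℝ}
    (hx : x ∈ Set.Ico (0 : ℝ) 1) (hy : y ∈ Set.Ico (0 : ℝ) 1) :
    |discAt P (x, y)| ≤ (((b : ℝ) - 1) * d + 1) / (b : ℝ) ^ d := by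
  have hgrid := hP.abs_discAt_grid_le h0 le_rfl (floor_mul_pow_lt hx d) hy
  have hremainder := hP.abs_discAt_sub_discAt_floor_le (fun a ↦ (h0 a).2) hx hy
  rw [add_div]
  linarith [abs_sub_abs_le_abs_sub (discAt P (x, y))
    (discAt P ((⌊x * (b : ℝ) ^ d⌋₊ : ℝ) / (b : ℝ) ^ d, y))]

theorem linfDisc_le (hP : IsNet b d P) (h0 : ∀ a, 0 ≤ P a) :
    LinfDisc P ≤ (((b : ℝ) - 1) * d + 1) / (b : ℝ) ^ d := by
  have hb : (1 : ℝ) ≤ b := Nat.one_le_cast.mpr (NeZero.pos b)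
  refine Real.iSup_le (fun y ↦ hP.abs_discAt_le h0 y.2.1 y.2.2) ?_
  have := sub_nonneg.mpr hb
  positivity

end IsNet

end Discrepancy

section RadixExpansion

variable {b : ℕ}

/-- The real number `0.v₀v₁⋯vₙ₋₁` in base `b`. -/
noncomputable def radixFraction {n : ℕ} (v : Fin n → ZMod b) : ℝ :=
  ∑ l : Fin n, ((v l).val : ℝ) / (b : ℝ) ^ ((l : ℕ) + 1)

theorem radixFraction_nonneg {n : ℕ} (v : Fin n → ZMod b) : 0 ≤ radixFraction v := by
  unfold radixFraction
  positivity

variable [NeZero b]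

theorem val_zmodFinEquiv (a : Fin b) : (ZMod.finEquiv b a).val = a := by
  cases b with
  | zero => exact a.elim0
  | succ b => rfl

theorem val_zmodFinEquiv_symm (x : ZMod b) : ((ZMod.finEquiv b).symm x : ℕ) = x.val := by
  rw [← val_zmodFinEquiv, RingEquiv.apply_symm_apply]

theorem bijective_natCast_zmod : Function.Bijective fun a : Fin b ↦ ((a : ℕ) : ZMod b) := by
  convert (ZMod.finEquiv b).bijective with a
  rw [← val_zmodFinEquiv, ZMod.natCast_zmod_val]

/-- The number with base-`b` digits `v 0, …, v (i - 1)`, **most** significant first; this is the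
order of the digits after the radix point, and opposite to that of `digitVec`. -/
noncomputable def leadingInt (b i : ℕ) [NeZero b] : (Fin i → ZMod b) ≃ Fin (b ^ i) :=
  (Equiv.arrowCongr Fin.revPerm (ZMod.finEquiv b).symm.toEquiv).trans finFunctionFinEquiv

theorem radixFraction_eq_leadingInt_div {n : ℕ} (v : Fin n → ZMod b) :
    radixFraction v = ((leadingInt b n v : ℕ) : ℝ) / (b : ℝ) ^ n := by
  have hb : (b : ℝ) ≠ 0 := Nat.cast_ne_zero.mpr (NeZero.ne b)
  have leadingInt_eq : ((leadingInt b n v : ℕ) : ℝ) =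
      ∑ l : Fin n, ((v l).val : ℝ) * (b : ℝ) ^ ((l.rev : Fin n) : ℕ) := by
    rw [← Equiv.sum_comp Fin.revPerm]
    simp [leadingInt, val_zmodFinEquiv_symm]
  rw [leadingInt_eq, Finset.sum_div]
  refine Finset.sum_congr rfl fun l _ ↦ ?_
  rw [div_eq_div_iff (by positivity) (by positivity), mul_assoc, ← pow_add, Fin.val_rev]
  congr 2
  omega

theorem radixFraction_lt_one {n : ℕ} (v : Fin n → ZMod b) : radixFraction v < 1 := by
  have hb : (0 : ℝ) < b := Nat.cast_pos.mpr (NeZero.pos b)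
  rw [radixFraction_eq_leadingInt_div, div_lt_one (by positivity)]
  exact_mod_cast (leadingInt b n v).2

theorem radixFraction_eq_add {i k : ℕ} (v : Fin (i + k) → ZMod b) :
    radixFraction v =
      radixFraction (v ∘ Fin.castAdd k) + radixFraction (v ∘ Fin.natAdd i) / (b : ℝ) ^ i := by
  have : (b : ℝ) ≠ 0 := Nat.cast_ne_zero.mpr (NeZero.ne b)
  unfold radixFraction
  rw [Fin.sum_univ_add, Finset.sum_div]
  congr 1
  refine Finset.sum_congr rfl fun l _ ↦ ?_
  rw [div_div, ← pow_add, Fin.val_natAdd, Function.comp_apply]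
  congr 2
  omega

theorem radixFraction_mem_elementaryInterval_iff {i n : ℕ} (hi : i ≤ n) (v : Fin n → ZMod b)
    (c : Fin (b ^ i)) :
    radixFraction v ∈ elementaryInterval b i c ↔
      v ∘ Fin.castLE hi = (leadingInt b i).symm c := by
  have hb : (0 : ℝ) < b := Nat.cast_pos.mpr (NeZero.pos b)
  obtain ⟨k, rfl⟩ := Nat.exists_eq_add_of_le hi
  have scaled : radixFraction v * (b : ℝ) ^ i =
      radixFraction (v ∘ Fin.natAdd i) + (leadingInt b i (v ∘ Fin.castAdd k) : ℕ) := by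
    rw [radixFraction_eq_add, radixFraction_eq_leadingInt_div (v ∘ Fin.castAdd k), ← add_div,
      div_mul_cancel₀ _ (by positivity), add_comm]
  rw [mem_elementaryInterval_iff (radixFraction_nonneg v), scaled,
    Nat.floor_add_natCast (radixFraction_nonneg _),
    Nat.floor_eq_zero.mpr (radixFraction_lt_one _), zero_add, Equiv.eq_symm_apply, Fin.ext_iff]
  rfl

end RadixExpansion

section DualNet

variable {b : ℕ} {d i j m n : ℕ} {C1 C2 : Matrix (Fin n) (Fin m) (ZMod b)}

/-- Every nonzero element of the dual net of `C1, C2` has NRT weight greater than `d`. -/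
def DualWeightGT (d : ℕ) (C1 C2 : Matrix (Fin n) (Fin m) (ZMod b)) : Prop :=
  ∀ k1 k2 : ℕ, k1 < b ^ n → k2 < b ^ n →
    C1ᵀ *ᵥ digitVec b n k1 + C2ᵀ *ᵥ digitVec b n k2 = 0 →
    ¬(k1 = 0 ∧ k2 = 0) → d < mu1 b k1 + mu1 b k2

theorem mu1_le_of_lt_pow {k : ℕ} (hk : k < b ^ i) : mu1 b k ≤ i := by
  unfold mu1
  split_ifs with h
  · exact i.zero_le
  · exact Nat.log_lt_of_lt_pow h hk

theorem exists_digitVec_eq_extend [NeZero b] (hi : i ≤ n) (u : Fin i → ZMod b) :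
    ∃ k < b ^ i, digitVec b n k = Function.extend (Fin.castLE hi) u 0 := by
  let k := finFunctionFinEquiv ((ZMod.finEquiv b).symm ∘ u)
  refine ⟨k, k.2, funext fun l ↦ ?_⟩
  rcases lt_or_ge (l : ℕ) i with hl | hl
  · have digit_eq : ((k : ℕ) / b ^ (l : ℕ)) % b = (u ⟨l, hl⟩).val := by
      rw [← finFunctionFinEquiv_symm_apply_val k ⟨l, hl⟩, Equiv.symm_apply_apply]
      exact val_zmodFinEquiv_symm _
    change _ = Function.extend (Fin.castLE hi) u 0 (Fin.castLE hi ⟨l, hl⟩)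
    rw [(Fin.castLE_injective hi).extend_apply, digitVec, digit_eq, ZMod.natCast_zmod_val]
  · have not_mem_range : ¬∃ l', Fin.castLE hi l' = l := by
      rintro ⟨l', rfl⟩
      exact hl.not_gt l'.2
    have : (k : ℕ) / b ^ (l : ℕ) = 0 :=
      Nat.div_eq_of_lt (k.2.trans_le (Nat.pow_le_pow_right (NeZero.pos b) hl))
    simp [Function.extend_apply' _ _ _ not_mem_range, digitVec, this]

theorem transpose_mulVec_extend {R κ μ ν : Type*} [NonUnitalNonAssocSemiring R] [Fintype κ]
    [Fintype μ] (M : Matrix μ ν R) {f : κ → μ} (hf : Function.Injective f) (u : κ → R) :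
    Mᵀ *ᵥ Function.extend f u 0 = (M.submatrix f id)ᵀ *ᵥ u := by
  ext q
  refine (Fintype.sum_of_injective f hf _ _ (fun l hl ↦ ?_) fun l ↦ ?_).symm
  · simp [Function.extend_apply' _ _ _ hl]
  · simp [hf.extend_apply]

theorem digitVec_zero : digitVec b n 0 = 0 := by
  ext
  simp [digitVec]

theorem DualWeightGT.injective_transpose_fromRows_mulVec [NeZero b] (H : DualWeightGT d C1 C2)
    (hij : i + j ≤ d) (hi : i ≤ n) (hj : j ≤ n) :
    Function.Injective (Matrix.fromRows (C1.submatrix (Fin.castLE hi) id)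
      (C2.submatrix (Fin.castLE hj) id))ᵀ.mulVec := by
  refine (injective_iff_map_eq_zero (Matrix.mulVecLin _)).mpr fun u hu ↦ ?_
  obtain ⟨k1, hk1, hd1⟩ := exists_digitVec_eq_extend hi (u ∘ Sum.inl)
  obtain ⟨k2, hk2, hd2⟩ := exists_digitVec_eq_extend hj (u ∘ Sum.inr)
  have mem_dual : C1ᵀ *ᵥ digitVec b n k1 + C2ᵀ *ᵥ digitVec b n k2 = 0 := by
    rw [hd1, hd2, transpose_mulVec_extend _ (Fin.castLE_injective hi),
      transpose_mulVec_extend _ (Fin.castLE_injective hj), ← hu, Matrix.mulVecLin_apply,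
      Matrix.transpose_fromRows, Matrix.fromCols_mulVec]
  have pow_le {l : ℕ} (hl : l ≤ n) : b ^ l ≤ b ^ n := Nat.pow_le_pow_right (NeZero.pos b) hl
  obtain ⟨rfl, rfl⟩ : k1 = 0 ∧ k2 = 0 := by
    by_contra hne
    have := H k1 k2 (hk1.trans_le (pow_le hi)) (hk2.trans_le (pow_le hj)) mem_dual hne
    have := mu1_le_of_lt_pow hk1
    have := mu1_le_of_lt_pow hk2
    omega
  rw [digitVec_zero] at hd1 hd2
  ext (l | l)
  · simpa [(Fin.castLE_injective hi).extend_apply] using (congrFun hd1 (Fin.castLE hi l)).symm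
  · simpa [(Fin.castLE_injective hj).extend_apply] using (congrFun hd2 (Fin.castLE hj l)).symm

theorem DualWeightGT.isNet_digitalNetPoint [NeZero b] (H : DualWeightGT d C1 C2) (hd : d ≤ n) :
    IsNet b d (digitalNetPoint b m n C1 C2) := by
  intro i j c e hij hc he
  have hi : i ≤ n := by omega
  have hj : j ≤ n := by omega
  let A := Matrix.fromRows (C1.submatrix (Fin.castLE hi) id) (C2.submatrix (Fin.castLE hj) id)
  let w := Sum.elim ((leadingInt b i).symm ⟨c, hc⟩) ((leadingInt b j).symm ⟨e, he⟩)
  have mem_iff (a : Fin m → Fin b) :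
      ((digitalNetPoint b m n C1 C2 a).1 ∈ elementaryInterval b i c ∧
        (digitalNetPoint b m n C1 C2 a).2 ∈ elementaryInterval b j e) ↔
      A *ᵥ ((fun r : Fin b ↦ ((r : ℕ) : ZMod b)) ∘ a) = w := by
    rw [Matrix.fromRows_mulVec, Sum.elim_eq_iff]
    exact and_congr (radixFraction_mem_elementaryInterval_iff hi _ ⟨c, hc⟩)
      (radixFraction_mem_elementaryInterval_iff hj _ ⟨e, he⟩)
  have card_eq : #{a | (digitalNetPoint b m n C1 C2 a).1 ∈ elementaryInterval b i c ∧
      (digitalNetPoint b m n C1 C2 a).2 ∈ elementaryInterval b j e} = #{x | A *ᵥ x = w} :=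
    Finset.card_bijective _ bijective_natCast_zmod.comp_left fun a ↦ by
      simpa only [Finset.mem_filter_univ] using mem_iff a
  have key := card_mulVec_eq_mul_card (ZMod.isPrimitive_stdAddChar b)
    (H.injective_transpose_fromRows_mulVec hij.le hi hj) w
  rw [card_eq]
  simpa only [Fintype.card_fun, Fintype.card_sum, Fintype.card_fin, ZMod.card, hij] using key

theorem digitalNetPoint_nonneg (a : Fin m → Fin b) :
    0 ≤ digitalNetPoint b m n C1 C2 a :=
  ⟨radixFraction_nonneg _, radixFraction_nonneg _⟩

theorem DualWeightGT.linfDisc_digitalNetPoint_le [NeZero b] (H : DualWeightGT d C1 C2)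
    (hd : d ≤ n) :
    LinfDisc (digitalNetPoint b m n C1 C2) ≤ (((b : ℝ) - 1) * d + 1) / (b : ℝ) ^ d :=
  (H.isNet_digitalNetPoint hd).linfDisc_le digitalNetPoint_nonneg

end DualNet

/-- For every integer `b ≥ 2` and every `t ∈ ℕ`, there is a constant
`C > 0` (depending only on `b` and `t`) such that for all `m, n ∈ ℕ` with
`t ≤ m ≤ n` (and `m ≥ 1`) and all `n × m` matrices `C₁, C₂` over `ZMod b` whose dual
net only contains pairs `(k₁, k₂) ≠ (0, 0)` with `μ₁(k₁) + μ₁(k₂) > m - t`, the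
two-dimensional digital net `P` generated by `C₁, C₂` satisfies
`L_∞(P) ≤ C · m / bᵐ`. -/
theorem linf_discrepancy_of_min_nrt_weight (b : ℕ) (hb : 2 ≤ b) (t : ℕ) :
    ∃ C : ℝ, 0 < C ∧ ∀ m n : ℕ, 1 ≤ m → t ≤ m → m ≤ n →
      ∀ C1 C2 : Matrix (Fin n) (Fin m) (ZMod b),
        (∀ k1 k2 : ℕ, k1 < b ^ n → k2 < b ^ n →
          Matrix.mulVec C1.transpose (digitVec b n k1) +
            Matrix.mulVec C2.transpose (digitVec b n k2) = 0 →
          ¬(k1 = 0 ∧ k2 = 0) → m - t < mu1 b k1 + mu1 b k2) →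
        LinfDisc (digitalNetPoint b m n C1 C2) ≤ C * (m : ℝ) / (b : ℝ) ^ m := by
  have hb1 : (1 : ℝ) ≤ b := by exact_mod_cast one_le_two.trans hb
  have : NeZero b := ⟨by omega⟩
  refine ⟨(b : ℝ) ^ (t + 1), by positivity, fun m n hm _ hmn C1 C2 H ↦ ?_⟩
  have disc_le := DualWeightGT.linfDisc_digitalNetPoint_le H ((m.sub_le t).trans hmn)
  have numerator_le : ((b : ℝ) - 1) * (m - t : ℕ) + 1 ≤ b * m := by
    have hm1 : (1 : ℝ) ≤ m := Nat.one_le_cast.mpr hm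
    have hsub : ((m - t : ℕ) : ℝ) ≤ m := Nat.cast_le.mpr (m.sub_le t)
    nlinarith [mul_le_mul_of_nonneg_left hsub (sub_nonneg.mpr hb1)]
  calc LinfDisc (digitalNetPoint b m n C1 C2)
      ≤ (((b : ℝ) - 1) * (m - t : ℕ) + 1) / (b : ℝ) ^ (m - t) := disc_le
    _ ≤ (b * m) / (b : ℝ) ^ (m - t) := by gcongr
    _ = (b : ℝ) ^ t * (b * m) / (b : ℝ) ^ (t + (m - t)) := by
      rw [pow_add, mul_div_mul_left _ _ (by positivity)]
    _ ≤ (b : ℝ) ^ t * (b * m) / (b : ℝ) ^ m := by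
      gcongr
      omega
    _ = (b : ℝ) ^ (t + 1) * m / (b : ℝ) ^ m := by ring
end

section
/- For every integer b ≥ 2, every real number p with 1 ≤ p < ∞, and every t ∈ ℕ₀, there exists a constant C > 0 (depending only on b, p and t) with the following property: for all m, n ∈ ℕ with m ≥ 1, t ≤ 2m and n ≥ 2m, and all n×m matrices C₁, C₂ over Z_b whose dual net P⊥ satisfies μ₂(k₁) + μ₂(k₂) > 2m − t for every (k₁, k₂) ∈ P⊥ with (k₁, k₂) ≠ (0, 0), the two-dimensional digital net P generated by C₁, C₂ satisfies L_p(P) ≤ C·√m / b^m. -/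
open MeasureTheory
open scoped BigOperators

/-- `L_p` discrepancy of the finite point family `P`, for `1 ≤ p < ∞`. -/
noncomputable def LpDisc (p : ℝ) {ι : Type} [Fintype ι] (P : ι → ℝ × ℝ) : ℝ :=
  (∫ y in (Set.Ico (0:ℝ) 1) ×ˢ (Set.Ico (0:ℝ) 1), |discAt P y| ^ p) ^ (1 / p)

/-- The Dick weight `μ₂(k)`: the sum of the two largest indices `i ≥ 1` such that the
`i`-th base-`b` digit of `k` is nonzero if `k` has at least two nonzero digits, the
largest such index if `k` has exactly one nonzero digit, and `μ₂(0) = 0`. -/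
def mu2 (b k : ℕ) : ℕ :=
  if k = 0 then 0
  else
    let a1 := Nat.log b k + 1
    let r := k % b ^ (a1 - 1)
    if r = 0 then a1 else a1 + (Nat.log b r + 1)

/-!
Up to `O(b⁻ᵐ)` the local discrepancy at `(y, z)` is a covariance `bias C₁ C₂ 1_{[0, k / bᵐ)}
1_{[0, l / bᵐ)}` of the two coordinates of the net. By orthogonality of characters, a dual net of
large minimal Dick weight makes the covariance of `f` and `g` vanish as soon as `f` sees only the
first `j₁` digits of the first coordinate and one further digit, `g` the same with `j₂`, and the
total weight of these digits is at most `2m - t`.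

Fix `l`. As a function of the digits of `k`, the covariance is the final value of a martingale:
average over all `k` with prescribed leading digits. An increment replaces `1_{[0, k / bᵐ)}` by a
difference of such averages, which is supported on one `b`-adic interval and is affine in the
remaining digits `i` with weights `b⁻ⁱ`. Splitting `1_{[0, l / bᵐ)}` along the digits of `l`, most
pairs (remaining digit, layer of `l`) have covariance zero and the others add up geometrically, so
every increment is `O(b⁻ᵐ)`. There are `m` increments, and the Azuma–Hoeffding inequality yields
subgaussian tails at scale `√m b⁻ᵐ`, uniformly in `l`, and with them all `Lₚ` norms.
-/

namespace DigitalNet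

open Finset Matrix

section Uniformity

variable {A B M ι κ : Type*}

theorem expect_comp_of_surjective [AddGroup A] [Fintype A] [AddGroup B] [Fintype B]
    [AddCommMonoid M] [Module ℚ≥0 M] (φ : A →+ B) (hφ : Function.Surjective φ) (F : B → M) :
    𝔼 a, F (φ a) = 𝔼 x, F x := by
  have translate (x : B) : 𝔼 a, F (φ a + x) = 𝔼 a, F (φ a) := by
    obtain ⟨c, rfl⟩ := hφ x
    exact Fintype.expect_equiv (Equiv.addRight c) _ _ fun a ↦ by simp
  calc 𝔼 a, F (φ a) = 𝔼 x, 𝔼 a, F (φ a + x) := by simp only [translate, Fintype.expect_const]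
    _ = 𝔼 a, 𝔼 x, F (φ a + x) := expect_comm ..
    _ = 𝔼 _a : A, 𝔼 x, F x :=
      expect_congr rfl fun a _ ↦ Fintype.expect_equiv (Equiv.addLeft (φ a)) _ _ fun _ ↦ rfl
    _ = 𝔼 x, F x := Fintype.expect_const _

variable {b : ℕ} [NeZero b] [Fintype ι] [Fintype κ]

theorem sum_stdAddChar_dotProduct [DecidableEq ι] (u : ι → ZMod b) :
    ∑ k : ι → ZMod b, ZMod.stdAddChar (k ⬝ᵥ u) =
      if u = 0 then (Fintype.card (ι → ZMod b) : ℂ) else 0 := by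
  let χ : AddChar (ι → ZMod b) ℂ :=
    ZMod.stdAddChar.compAddMonoidHom (AddMonoidHom.mk' (· ⬝ᵥ u) fun k l ↦ add_dotProduct k l u)
  have trivial_iff : χ = 0 ↔ u = 0 := by
    refine ⟨fun h ↦ funext fun i ↦ ZMod.injective_stdAddChar ?_, fun h ↦ ?_⟩
    · simpa [χ] using DFunLike.congr_fun h (Pi.single i 1)
    · ext k; simp [χ, h]
  exact (AddChar.sum_eq_ite χ).trans (if_congr trivial_iff rfl rfl)

theorem mulVec_surjective_of_vecMul_eq_zero (M : Matrix ι κ (ZMod b))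
    (hM : ∀ k, k ᵥ* M = 0 → k = 0) : Function.Surjective M.mulVec := by
  classical
  intro w
  have double_sum : ∑ a, ∑ k, ZMod.stdAddChar (k ⬝ᵥ (M *ᵥ a - w)) =
      (Fintype.card (κ → ZMod b) : ℂ) := by
    calc ∑ a, ∑ k, ZMod.stdAddChar (k ⬝ᵥ (M *ᵥ a - w))
        = ∑ k, ZMod.stdAddChar (-(k ⬝ᵥ w)) * ∑ a, ZMod.stdAddChar (a ⬝ᵥ (k ᵥ* M)) := by
          rw [sum_comm]
          refine sum_congr rfl fun k _ ↦ ?_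
          rw [mul_sum]
          refine sum_congr rfl fun a _ ↦ ?_
          rw [← AddChar.map_add_eq_mul, dotProduct_sub, dotProduct_mulVec, dotProduct_comm a,
            neg_add_eq_sub]
      _ = ∑ k, if (k : ι → ZMod b) = 0 then (Fintype.card (κ → ZMod b) : ℂ) else 0 := by
          refine sum_congr rfl fun k _ ↦ ?_
          have vecMul_iff : k ᵥ* M = 0 ↔ k = 0 := ⟨hM k, fun h ↦ by rw [h, zero_vecMul]⟩
          rw [sum_stdAddChar_dotProduct]
          by_cases hk : k = 0 <;> simp [vecMul_iff, hk]
      _ = _ := by simp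
  obtain ⟨a, -, ha⟩ := exists_ne_zero_of_sum_ne_zero
    (double_sum.trans_ne (Nat.cast_ne_zero.mpr Fintype.card_ne_zero))
  refine ⟨a, sub_eq_zero.mp ?_⟩
  by_contra h
  exact ha (by rw [sum_stdAddChar_dotProduct, if_neg h])

variable [DecidableEq ι] [DecidableEq κ]

theorem expect_mulVec_eq_of_dependsOn [AddCommMonoid M] [Module ℚ≥0 M]
    (C : Matrix ι κ (ZMod b)) {s : Set ι} {F : (ι → ZMod b) → M} (hF : DependsOn F s)
    (hC : ∀ k : ι → ZMod b, (∀ i ∉ s, k i = 0) → k ᵥ* C = 0 → k = 0) :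
    𝔼 a, F (C *ᵥ a) = 𝔼 x, F x := by
  classical
  obtain ⟨g, rfl⟩ := dependsOn_iff_exists_comp.mp hF
  have surjective : Function.Surjective (C.submatrix ((↑) : s → ι) id).mulVec := by
    refine mulVec_surjective_of_vecMul_eq_zero _ fun k hk ↦ ?_
    let l : ι → ZMod b := Function.extend (↑) k 0
    have l_coe (i : s) : l i = k i := Subtype.val_injective.extend_apply k 0 i
    have l_of_notMem (i : ι) (hi : i ∉ s) : l i = 0 :=
      Function.extend_apply' _ _ _ fun ⟨j, hj⟩ ↦ hi (hj ▸ j.2)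
    have vecMul_eq : l ᵥ* C = k ᵥ* C.submatrix ((↑) : s → ι) id := by
      ext j
      refine (Fintype.sum_of_injective _ Subtype.val_injective _ _ ?_ ?_).symm
      · intro i hi
        rw [l_of_notMem i (by simpa using hi), zero_mul]
      · intro i
        simp only [l_coe, submatrix_apply, id]
    ext i
    rw [← l_coe, hC l l_of_notMem (vecMul_eq.trans hk), Pi.zero_apply, Pi.zero_apply]
  have restrict_surjective : Function.Surjective (s.domRestrict : (ι → ZMod b) → _) :=
    Subtype.surjective_restrict _
  exact (expect_comp_of_surjective (mulVecLin _).toAddMonoidHom surjective g).trans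
    (expect_comp_of_surjective (AddMonoidHom.mk' s.domRestrict fun _ _ ↦ rfl)
      restrict_surjective g).symm

/-- The covariance between the two coordinates of the digital net generated by `C₁, C₂`, with
respect to test functions `f` and `g` of the digit vectors: the average of `f ⊗ g` over the net
minus its average over all pairs of digit vectors. -/
noncomputable def bias (C₁ C₂ : Matrix ι κ (ZMod b)) :
    ((ι → ZMod b) → ℝ) →ₗ[ℝ] ((ι → ZMod b) → ℝ) →ₗ[ℝ] ℝ :=
  LinearMap.mk₂ ℝ (fun f g ↦ 𝔼 a, f (C₁ *ᵥ a) * g (C₂ *ᵥ a) - (𝔼 v, f v) * 𝔼 w, g w)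
    (fun f f' g ↦ by
      simp only [Pi.add_apply, add_mul, expect_add_distrib, add_sub_add_comm])
    (fun c f g ↦ by
      simp only [Pi.smul_apply, smul_eq_mul, mul_assoc, ← mul_expect, ← mul_sub])
    (fun f g g' ↦ by
      simp only [Pi.add_apply, mul_add, expect_add_distrib, add_sub_add_comm])
    (fun c f g ↦ by
      simp only [Pi.smul_apply, smul_eq_mul, mul_left_comm _ c, ← mul_expect, ← mul_sub])

theorem bias_apply (C₁ C₂ : Matrix ι κ (ZMod b)) (f g : (ι → ZMod b) → ℝ) :
    bias C₁ C₂ f g = 𝔼 a, f (C₁ *ᵥ a) * g (C₂ *ᵥ a) - (𝔼 v, f v) * 𝔼 w, g w :=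
  rfl

theorem bias_eq_zero_of_dependsOn {C₁ C₂ : Matrix ι κ (ZMod b)} {s₁ s₂ : Set ι}
    {f g : (ι → ZMod b) → ℝ} (hf : DependsOn f s₁) (hg : DependsOn g s₂)
    (hC : ∀ k₁ k₂ : ι → ZMod b, (∀ i ∉ s₁, k₁ i = 0) → (∀ i ∉ s₂, k₂ i = 0) →
      C₁ᵀ *ᵥ k₁ + C₂ᵀ *ᵥ k₂ = 0 → k₁ = 0 ∧ k₂ = 0) :
    bias C₁ C₂ f g = 0 := by
  let F : (ι ⊕ ι → ZMod b) → ℝ := fun x ↦ f (x ∘ Sum.inl) * g (x ∘ Sum.inr)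
  have hF : DependsOn F (Sum.elim (· ∈ s₁) (· ∈ s₂)) := fun x y hxy ↦
    congrArg₂ (· * ·) (hf fun i hi ↦ hxy (.inl i) hi) (hg fun i hi ↦ hxy (.inr i) hi)
  have net_average : 𝔼 a, f (C₁ *ᵥ a) * g (C₂ *ᵥ a) = 𝔼 x, F x := by
    rw [← expect_mulVec_eq_of_dependsOn (fromRows C₁ C₂) hF]
    · simp only [F, fromRows_mulVec, Sum.elim_comp_inl, Sum.elim_comp_inr]
    · intro k hk hkC
      obtain ⟨h₁, h₂⟩ := hC (k ∘ Sum.inl) (k ∘ Sum.inr) (fun i hi ↦ hk (.inl i) hi)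
        (fun i hi ↦ hk (.inr i) hi)
        (by rw [mulVec_transpose, mulVec_transpose, ← vecMul_fromRows, hkC])
      exact funext (Sum.rec (congrFun h₁) (congrFun h₂))
  have grid_average : 𝔼 x, F x = (𝔼 v, f v) * 𝔼 w, g w := by
    rw [Fintype.expect_mul_expect, ← Finset.expect_product']
    exact Fintype.expect_equiv (Equiv.sumArrowEquivProdArrow ι ι (ZMod b)) _ _ fun x ↦ rfl
  rw [bias_apply, net_average, grid_average, sub_self]

end Uniformity

section DickWeight

variable {b n m : ℕ}

theorem mu2_le_of_digits (hb : 2 ≤ b) {j i k : ℕ}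
    (hk : ∀ q, k / b ^ q % b ≠ 0 → q < j ∨ q + 1 = j + i) : mu2 b k ≤ 2 * j + i := by
  have leading_digit_ne_zero {r : ℕ} (hr : r ≠ 0) : r / b ^ Nat.log b r % b ≠ 0 := by
    rw [Nat.mod_eq_of_lt (Nat.div_lt_of_lt_mul
      (by simpa only [pow_succ] using Nat.lt_pow_succ_log_self hb r))]
    exact (Nat.div_pos (Nat.pow_log_le_self b hr) (by positivity)).ne'
  unfold mu2
  split_ifs with hk0
  · exact Nat.zero_le _
  have first := hk _ (leading_digit_ne_zero hk0)
  simp only [Nat.add_sub_cancel]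
  split_ifs with hr0
  · omega
  set r := k % b ^ Nat.log b k with hr
  have log_lt : Nat.log b r < Nat.log b k :=
    (Nat.log_lt_iff_lt_pow hb hr0).mpr (Nat.mod_lt _ (by positivity))
  have digit_eq : r / b ^ Nat.log b r % b = k / b ^ Nat.log b r % b := by
    obtain ⟨d, hd⟩ := Nat.exists_eq_add_of_lt log_lt
    nth_rewrite 1 [hr]
    rw [hd, add_assoc, pow_add, Nat.mod_mul_right_div_self, pow_succ', Nat.mod_mul_right_mod]
  have second := hk _ (digit_eq ▸ leading_digit_ne_zero hr0)
  omega

/-- The first `j` of `n` digit positions together with the `i`-th position after them (no further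
position if `i = 0`); positions are counted from `0`. A nonzero `k` whose nonzero digits lie here
has `μ₂(k) ≤ 2 j + i`. -/
def digitWindow (n j i : ℕ) : Set (Fin n) :=
  {q | (q : ℕ) < j ∨ (q : ℕ) + 1 = j + i}

variable [NeZero b]

theorem exists_digitVec_eq (k : Fin n → ZMod b) :
    ∃ K < b ^ n, digitVec b n K = k ∧ ∀ q (hq : q < n), K / b ^ q % b = (k ⟨q, hq⟩).val := by
  let K := finFunctionFinEquiv fun q ↦ (⟨(k q).val, ZMod.val_lt _⟩ : Fin b)
  have hK (q : Fin n) : (K : ℕ) / b ^ (q : ℕ) % b = (k q).val := by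
    rw [← finFunctionFinEquiv_symm_apply_val, Equiv.symm_apply_apply]
  refine ⟨K, K.2, funext fun q ↦ ?_, fun q hq ↦ hK ⟨q, hq⟩⟩
  rw [digitVec, hK, ZMod.natCast_zmod_val]

/-- The two coordinates of the digital net generated by `C₁, C₂` are uncorrelated as seen through
digit windows of total Dick weight at most `2 m - t`. This is what a large minimal Dick weight of
the dual net says about the net itself. -/
def IsDickUniform (t : ℕ) (C₁ C₂ : Matrix (Fin n) (Fin m) (ZMod b)) : Prop :=
  ∀ j₁ i₁ j₂ i₂, 2 * j₁ + i₁ + (2 * j₂ + i₂) ≤ 2 * m - t → ∀ f g : (Fin n → ZMod b) → ℝ,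
    DependsOn f (digitWindow n j₁ i₁) → DependsOn g (digitWindow n j₂ i₂) → bias C₁ C₂ f g = 0

theorem isDickUniform_of_lt_mu2 (hb : 2 ≤ b) {t : ℕ} {C₁ C₂ : Matrix (Fin n) (Fin m) (ZMod b)}
    (hC : ∀ k₁ k₂ : ℕ, k₁ < b ^ n → k₂ < b ^ n →
      C₁ᵀ *ᵥ digitVec b n k₁ + C₂ᵀ *ᵥ digitVec b n k₂ = 0 → ¬(k₁ = 0 ∧ k₂ = 0) →
        2 * m - t < mu2 b k₁ + mu2 b k₂) :
    IsDickUniform t C₁ C₂ := by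
  intro j₁ i₁ j₂ i₂ hw f g hf hg
  refine bias_eq_zero_of_dependsOn hf hg fun k₁ k₂ hk₁ hk₂ hk ↦ ?_
  have weight_le {K j i : ℕ} {k : Fin n → ZMod b} (hKn : K < b ^ n)
      (hK : ∀ q (hq : q < n), K / b ^ q % b = (k ⟨q, hq⟩).val)
      (hk : ∀ q ∉ digitWindow n j i, k q = 0) : mu2 b K ≤ 2 * j + i := by
    refine mu2_le_of_digits hb fun q hq ↦ ?_
    obtain hqn | hqn := lt_or_ge q n
    · by_contra hqw
      exact hq (by rw [hK q hqn, hk ⟨q, hqn⟩ hqw, ZMod.val_zero])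
    · rw [Nat.div_eq_of_lt (hKn.trans_le (Nat.pow_le_pow_right (by omega) hqn))] at hq
      exact absurd (Nat.zero_mod b) hq
  obtain ⟨K₁, hK₁, rfl, hd₁⟩ := exists_digitVec_eq k₁
  obtain ⟨K₂, hK₂, rfl, hd₂⟩ := exists_digitVec_eq k₂
  have both_zero : K₁ = 0 ∧ K₂ = 0 := by
    by_contra hne
    have := hC K₁ K₂ hK₁ hK₂ hk hne
    have := weight_le hK₁ hd₁ hk₁
    have := weight_le hK₂ hd₂ hk₂
    omega
  have digitVec_zero : digitVec b n 0 = 0 := by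
    ext; simp [digitVec]
  rw [both_zero.1, both_zero.2, digitVec_zero]
  exact ⟨rfl, rfl⟩

end DickWeight

section Digits

variable {b n : ℕ}

/-- The `i`-th entry of a digit vector as a natural number, `0` beyond the end of the vector.
Entry `0` is the most significant digit of the corresponding point of `[0, 1)`. -/
def digit (v : Fin n → ZMod b) (i : ℕ) : ℕ :=
  if h : i < n then (v ⟨i, h⟩).val else 0

/-- The integer whose base-`b` expansion consists of the first `j` digits of `v`, so that the
point with digits `v` lies in the `b`-adic interval `[lead v j / b ^ j, (lead v j + 1) / b ^ j)`. -/
def lead (v : Fin n → ZMod b) : ℕ → ℕ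
  | 0 => 0
  | j + 1 => b * lead v j + digit v j

/-- The number in `[0, 1)` whose base-`b` digits are the `N` digits of `v` from position `j` on. -/
noncomputable def tail (v : Fin n → ZMod b) (j N : ℕ) : ℝ :=
  ∑ i ∈ range N, (digit v (j + i) : ℝ) / (b : ℝ) ^ (i + 1)

theorem tail_nonneg (v : Fin n → ZMod b) (j N : ℕ) : 0 ≤ tail v j N :=
  sum_nonneg fun _ _ ↦ by positivity

theorem dependsOn_digitWindow {α : Type*} {j i : ℕ} {f : (Fin n → ZMod b) → α}
    (hf : ∀ v w : Fin n → ZMod b,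
      (∀ q, q < j ∨ q + 1 = j + i → digit v q = digit w q) → f v = f w) :
    DependsOn f (digitWindow n j i) := by
  refine fun v w h ↦ hf v w fun q hq ↦ ?_
  unfold digit
  split_ifs with hqn
  · rw [h ⟨q, hqn⟩ hq]
  · rfl

variable [NeZero b]

theorem digit_lt (v : Fin n → ZMod b) (i : ℕ) : digit v i < b := by
  unfold digit
  split_ifs
  · exact ZMod.val_lt _
  · exact Nat.pos_of_neZero b

theorem lead_eq_lead_iff {n' j : ℕ} {v : Fin n → ZMod b} {w : Fin n' → ZMod b} :
    lead v j = lead w j ↔ ∀ i < j, digit v i = digit w i := by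
  induction j with
  | zero => simp [lead]
  | succ j ih =>
    rw [Nat.forall_lt_succ_right, ← ih, lead, lead]
    refine ⟨fun h ↦ ?_, fun h ↦ by rw [h.1, h.2]⟩
    have hb := Nat.pos_of_neZero b
    have quotients := congrArg (· / b) h
    have remainders := congrArg (· % b) h
    simp only [Nat.mul_add_div hb, Nat.div_eq_of_lt (digit_lt _ _), add_zero] at quotients
    simp only [Nat.mul_add_mod, Nat.mod_eq_of_lt (digit_lt _ _)] at remainders
    exact ⟨quotients, remainders⟩

theorem lead_add_div (v : Fin n → ZMod b) (j i : ℕ) : lead v (j + i) / b ^ i = lead v j := by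
  induction i with
  | zero => simp
  | succ i ih =>
    rw [← add_assoc, pow_succ', ← Nat.div_div_eq_div_mul, lead,
      Nat.mul_add_div (Nat.pos_of_neZero b), Nat.div_eq_of_lt (digit_lt _ _), add_zero, ih]

theorem lead_lt (v : Fin n → ZMod b) (j : ℕ) : lead v j < b ^ j := by
  have := lead_add_div v 0 j
  rw [zero_add] at this
  exact Nat.lt_of_div_eq_zero (pow_pos (Nat.pos_of_neZero b) j) this

theorem mul_tail_succ (v : Fin n → ZMod b) (j N : ℕ) :
    b * tail v j (N + 1) = digit v j + tail v (j + 1) N := by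
  have hb : (b : ℝ) ≠ 0 := Nat.cast_ne_zero.mpr (NeZero.ne b)
  rw [tail, sum_range_succ', mul_add, mul_sum, add_comm, tail]
  congr 1
  · simp [field]
  · refine sum_congr rfl fun i _ ↦ ?_
    rw [Nat.add_right_comm j 1 i, pow_succ _ (i + 1), add_assoc]
    field_simp

theorem tail_lt_one (v : Fin n → ZMod b) (j N : ℕ) : tail v j N < 1 := by
  induction N generalizing j with
  | zero => simp [tail]
  | succ N ih =>
    have hb : (0 : ℝ) < b := Nat.cast_pos.mpr (Nat.pos_of_neZero b)
    have hd : (digit v j : ℝ) + 1 ≤ b := mod_cast digit_lt v j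
    refine lt_of_mul_lt_mul_left ?_ hb.le
    linarith [mul_tail_succ v j N, ih (j + 1)]

theorem pow_mul_tail_zero (v : Fin n → ZMod b) (j N : ℕ) :
    (b : ℝ) ^ j * tail v 0 (j + N) = lead v j + tail v j N := by
  induction j generalizing N with
  | zero => simp [lead]
  | succ j ih =>
    rw [pow_succ', mul_assoc, add_right_comm, add_assoc, ih, mul_add, mul_tail_succ, lead]
    push_cast
    ring

theorem lead_bijective :
    Function.Bijective fun v : Fin n → ZMod b ↦ (⟨lead v n, lead_lt v n⟩ : Fin (b ^ n)) := by
  refine (Fintype.bijective_iff_injective_and_card _).mpr ⟨fun v w h ↦ funext fun q ↦ ?_, ?_⟩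
  · have := lead_eq_lead_iff.mp (Fin.mk.inj h) q q.2
    simp only [digit, q.2, dif_pos] at this
    exact ZMod.val_injective b this
  · simp [ZMod.card]

theorem expect_lead {c : ℕ} (hc : c ≤ n) (F : ℕ → ℝ) :
    𝔼 v : Fin n → ZMod b, F (lead v c) = 𝔼 Y ∈ range (b ^ c), F Y := by
  let truncate : (Fin n → ZMod b) →+ (Fin c → ZMod b) :=
    AddMonoidHom.mk' (fun v i ↦ v (Fin.castLE hc i)) fun _ _ ↦ rfl
  have truncate_surjective : Function.Surjective truncate :=
    (Fin.castLE_injective hc).surjective_comp_right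
  have lead_truncate (v : Fin n → ZMod b) : lead (truncate v) c = lead v c :=
    lead_eq_lead_iff.mpr fun i hi ↦ by
      simp only [digit, hi, hi.trans_le hc, dif_pos]; rfl
  calc 𝔼 v : Fin n → ZMod b, F (lead v c)
      = 𝔼 u : Fin c → ZMod b, F (lead u c) := by
        simp only [← lead_truncate]
        exact expect_comp_of_surjective truncate truncate_surjective fun u ↦ F (lead u c)
    _ = 𝔼 Y : Fin (b ^ c), F Y := Fintype.expect_bijective _ lead_bijective _ _ fun _ ↦ rfl
    _ = 𝔼 Y ∈ range (b ^ c), F Y := by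
      rw [Fintype.expect_eq_sum_div_card, expect_eq_sum_div_card, Fin.sum_univ_eq_sum_range,
        Fintype.card_fin, card_range]

end Digits

section BoxBounds

variable {b n m t : ℕ}

/-- The indicator function of the `b`-adic interval `[Y / b ^ c, (Y + 1) / b ^ c)`, as a function of
the digit vector of a point. -/
def badicInd (c Y : ℕ) (v : Fin n → ZMod b) : ℝ :=
  if lead v c = Y then 1 else 0

theorem badicInd_nonneg (c Y : ℕ) (v : Fin n → ZMod b) : 0 ≤ badicInd c Y v := by
  unfold badicInd
  split_ifs <;> norm_num

variable [NeZero b]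

theorem badicInd_dependsOn (c Y : ℕ) :
    DependsOn (badicInd c Y : (Fin n → ZMod b) → ℝ) (digitWindow n c 0) :=
  dependsOn_digitWindow fun v w h ↦ by
    rw [badicInd, badicInd, lead_eq_lead_iff.mpr fun i hi ↦ h i (.inl hi)]

theorem badicInd_le_of_le {c' c : ℕ} (hc : c' ≤ c) (Y : ℕ) (v : Fin n → ZMod b) :
    badicInd c Y v ≤ badicInd c' (Y / b ^ (c - c')) v := by
  unfold badicInd
  split_ifs with h h'
  · exact le_rfl
  · exact absurd (by rw [← h, ← lead_add_div v c' (c - c'), Nat.add_sub_cancel' hc]) h'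
  all_goals norm_num

theorem expect_badicInd_le {c : ℕ} (hc : c ≤ n) (Y : ℕ) :
    𝔼 v : Fin n → ZMod b, badicInd c Y v ≤ 1 / (b : ℝ) ^ c := by
  simp only [badicInd]
  rw [expect_lead hc fun X ↦ if X = Y then (1 : ℝ) else 0, expect_eq_sum_div_card, card_range,
    Nat.cast_pow, sum_ite_eq']
  gcongr
  split_ifs <;> norm_num

theorem abs_expect_le_div_pow {c Y : ℕ} (hc : c ≤ n) {A : ℝ} (hA : 0 ≤ A)
    {f : (Fin n → ZMod b) → ℝ} (hf : ∀ v, |f v| ≤ A * badicInd c Y v) :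
    |𝔼 v, f v| ≤ A / (b : ℝ) ^ c :=
  calc |𝔼 v, f v| ≤ 𝔼 v, |f v| := abs_expect_le _ _
    _ ≤ 𝔼 v, A * badicInd c Y v := expect_le_expect fun v _ ↦ hf v
    _ = A * 𝔼 v : Fin n → ZMod b, badicInd c Y v := (mul_expect _ _ _).symm
    _ ≤ A * (1 / (b : ℝ) ^ c) := mul_le_mul_of_nonneg_left (expect_badicInd_le hc Y) hA
    _ = A / (b : ℝ) ^ c := mul_one_div _ _

variable {C₁ C₂ : Matrix (Fin n) (Fin m) (ZMod b)}

theorem expect_badicInd_mul_le (hC : IsDickUniform t C₁ C₂) (hmn : m ≤ n) {c d : ℕ}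
    (hcd : c + d ≤ m) (Y Z : ℕ) :
    𝔼 a, badicInd c Y (C₁ *ᵥ a) * badicInd d Z (C₂ *ᵥ a) ≤ (b : ℝ) ^ t / (b : ℝ) ^ (c + d) := by
  obtain ⟨c', d', hc, hd, hw, ht⟩ : ∃ c' d', c' ≤ c ∧ d' ≤ d ∧
      2 * c' + 0 + (2 * d' + 0) ≤ 2 * m - t ∧ c + d ≤ t + (c' + d') :=
    ⟨min c (m - t), min d (m - t - min c (m - t)), by omega⟩
  set Y' := Y / b ^ (c - c')
  set Z' := Z / b ^ (d - d')
  have uncorrelated := hC c' 0 d' 0 hw _ _ (badicInd_dependsOn c' Y') (badicInd_dependsOn d' Z')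
  have hb : (1 : ℝ) ≤ b := Nat.one_le_cast.mpr (Nat.pos_of_neZero b)
  calc 𝔼 a, badicInd c Y (C₁ *ᵥ a) * badicInd d Z (C₂ *ᵥ a)
      ≤ 𝔼 a, badicInd c' Y' (C₁ *ᵥ a) * badicInd d' Z' (C₂ *ᵥ a) :=
        expect_le_expect fun a _ ↦ mul_le_mul (badicInd_le_of_le hc _ _) (badicInd_le_of_le hd _ _)
          (badicInd_nonneg _ _ _) (badicInd_nonneg _ _ _)
    _ = (𝔼 v, badicInd c' Y' v) * 𝔼 w, badicInd d' Z' w := by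
        rwa [bias_apply, sub_eq_zero] at uncorrelated
    _ ≤ 1 / (b : ℝ) ^ c' * (1 / (b : ℝ) ^ d') :=
        mul_le_mul (expect_badicInd_le (by omega) _) (expect_badicInd_le (by omega) _)
          (expect_nonneg fun _ _ ↦ badicInd_nonneg _ _ _) (by positivity)
    _ ≤ (b : ℝ) ^ t / (b : ℝ) ^ (c + d) := by
        rw [div_mul_div_comm, one_mul, ← pow_add, div_le_div_iff₀ (by positivity) (by positivity),
          one_mul, ← pow_add]
        exact pow_le_pow_right₀ hb ht

theorem abs_bias_le (hC : IsDickUniform t C₁ C₂) (hmn : m ≤ n) {c d Y Z : ℕ} (hcd : c + d ≤ m)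
    {A : ℝ} (hA : 0 ≤ A) {f g : (Fin n → ZMod b) → ℝ} (hf : ∀ v, |f v| ≤ A * badicInd c Y v)
    (hg : ∀ w, |g w| ≤ badicInd d Z w) :
    |bias C₁ C₂ f g| ≤ 2 * A * (b : ℝ) ^ t / (b : ℝ) ^ (c + d) := by
  have hb : (1 : ℝ) ≤ b := Nat.one_le_cast.mpr (Nat.pos_of_neZero b)
  have net_average : |𝔼 a, f (C₁ *ᵥ a) * g (C₂ *ᵥ a)| ≤ A * ((b : ℝ) ^ t / (b : ℝ) ^ (c + d)) :=
    calc |𝔼 a, f (C₁ *ᵥ a) * g (C₂ *ᵥ a)|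
        ≤ 𝔼 a, |f (C₁ *ᵥ a) * g (C₂ *ᵥ a)| := abs_expect_le _ _
      _ ≤ 𝔼 a, A * (badicInd c Y (C₁ *ᵥ a) * badicInd d Z (C₂ *ᵥ a)) := by
          refine expect_le_expect fun a _ ↦ ?_
          rw [abs_mul, ← mul_assoc]
          exact mul_le_mul (hf _) (hg _) (abs_nonneg _) (mul_nonneg hA (badicInd_nonneg _ _ _))
      _ ≤ A * ((b : ℝ) ^ t / (b : ℝ) ^ (c + d)) := by
          rw [← mul_expect]
          exact mul_le_mul_of_nonneg_left (expect_badicInd_mul_le hC hmn hcd Y Z) hA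
  have second_average : |𝔼 w, g w| ≤ 1 / (b : ℝ) ^ d :=
    abs_expect_le_div_pow (by omega) zero_le_one (by simpa only [one_mul] using hg)
  calc |bias C₁ C₂ f g|
      ≤ |𝔼 a, f (C₁ *ᵥ a) * g (C₂ *ᵥ a)| + |𝔼 v, f v| * |𝔼 w, g w| := by
        rw [bias_apply, ← abs_mul]
        exact abs_sub _ _
    _ ≤ A * ((b : ℝ) ^ t / (b : ℝ) ^ (c + d)) + A / (b : ℝ) ^ c * (1 / (b : ℝ) ^ d) :=
        add_le_add net_average (mul_le_mul (abs_expect_le_div_pow (by omega) hA hf)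
          second_average (abs_nonneg _) (by positivity))
    _ = A * ((b : ℝ) ^ t + 1) / (b : ℝ) ^ (c + d) := by rw [pow_add]; field_simp
    _ ≤ 2 * A * (b : ℝ) ^ t / (b : ℝ) ^ (c + d) := by
        refine div_le_div_of_nonneg_right ?_ (by positivity)
        linarith [mul_nonneg hA (sub_nonneg.mpr (one_le_pow₀ hb : 1 ≤ (b : ℝ) ^ t))]

end BoxBounds

section Correlation

theorem abs_sum_le_of_geometric {b : ℕ} (hb : 2 ≤ b) {N a : ℕ} {B : ℝ} (hB : 0 ≤ B) {x : ℕ → ℝ}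
    (hx₀ : ∀ i < a, x i = 0) (hx : ∀ i < N, |x i| ≤ B / (b : ℝ) ^ i) :
    |∑ i ∈ range N, x i| ≤ 2 * B / (b : ℝ) ^ a := by
  let y : ℕ → ℝ := fun i ↦ if i < a then 0 else B / (b : ℝ) ^ i
  have y_nonneg (i : ℕ) : 0 ≤ y i := by
    simp only [y]; split_ifs <;> positivity
  have abs_le_y {i : ℕ} (hi : i < N) : |x i| ≤ y i := by
    simp only [y]
    split_ifs with hia
    · rw [hx₀ i hia, abs_zero]
    · exact hx i hi
  have y_shift (i : ℕ) : y (a + i) ≤ B / (b : ℝ) ^ a * (1 / 2) ^ i := by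
    have hb' : (2 : ℝ) ≤ b := mod_cast hb
    simp only [y, Nat.not_lt.mpr (Nat.le_add_right a i), if_false, pow_add, ← div_div]
    rw [div_eq_mul_one_div _ ((b : ℝ) ^ i), ← _root_.one_div_pow]
    gcongr
  calc |∑ i ∈ range N, x i| ≤ ∑ i ∈ range N, |x i| := abs_sum_le_sum_abs _ _
    _ ≤ ∑ i ∈ range N, y i := sum_le_sum fun i hi ↦ abs_le_y (mem_range.mp hi)
    _ ≤ ∑ i ∈ range (a + N), y i :=
        sum_le_sum_of_subset_of_nonneg (range_subset_range.mpr (Nat.le_add_left N a))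
          fun i _ _ ↦ y_nonneg i
    _ = ∑ i ∈ range N, y (a + i) := by
        rw [sum_range_add, sum_eq_zero fun i hi ↦ if_pos (mem_range.mp hi), zero_add]
    _ ≤ ∑ i ∈ range N, B / (b : ℝ) ^ a * (1 / 2) ^ i := sum_le_sum fun i _ ↦ y_shift i
    _ ≤ B / (b : ℝ) ^ a * 2 := by
        rw [← mul_sum]
        exact mul_le_mul_of_nonneg_left (sum_geometric_two_le N) (by positivity)
    _ = 2 * B / (b : ℝ) ^ a := by ring

variable {b n m t : ℕ}

/-- The indicator function of `[0, (Z + 1) / b ^ m)`, as a function of the digit vector of a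
point. -/
def anchoredInd (m Z : ℕ) (w : Fin n → ZMod b) : ℝ :=
  if lead w m ≤ Z then 1 else 0

/-- The indicator function of `[0, z)`, where `z` is `Z / b ^ m` truncated to `l` digits, as a
function of the digit vector of a point. -/
def truncatedInd (m Z l : ℕ) (w : Fin n → ZMod b) : ℝ :=
  if lead w l < Z / b ^ (m - l) then 1 else 0

/-- The terms `f i` of a function of the digit vector of a point that is supported on the `b`-adic
interval `[Y / b ^ c, (Y + 1) / b ^ c)` and in which the `i`-th digit after the first `j` digits
enters only through `f i`, with weight `b ^ (-i)` up to the factor `b`. -/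
structure IsDigitSeries (c j Y : ℕ) (f : ℕ → (Fin n → ZMod b) → ℝ) : Prop where
  dependsOn : ∀ i, DependsOn (f i) (digitWindow n j i)
  abs_le : ∀ i v, |f i v| ≤ b / (b : ℝ) ^ i * badicInd c Y v

theorem abs_ite_sub_truncatedInd_le {Z l : ℕ} {w : Fin n → ZMod b} {P : Prop} [Decidable P]
    (hlt : lead w l < Z / b ^ (m - l) → P) (hgt : Z / b ^ (m - l) < lead w l → ¬P) :
    |(if P then 1 else 0) - truncatedInd m Z l w| ≤ badicInd l (Z / b ^ (m - l)) w := by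
  unfold truncatedInd badicInd
  obtain h | h | h := lt_trichotomy (lead w l) (Z / b ^ (m - l))
  · simp [h, h.ne, hlt h]
  · simp only [h, lt_irrefl, if_true, if_false, sub_zero]
    split_ifs <;> norm_num
  · simp [h.not_gt, h.ne', hgt h]

theorem anchoredInd_eq_add_sum {Z : ℕ} (hZ : Z < b ^ m) (L : ℕ) :
    (anchoredInd m Z : (Fin n → ZMod b) → ℝ) = anchoredInd m Z - truncatedInd m Z L +
      ∑ l ∈ range L, (truncatedInd m Z (l + 1) - truncatedInd m Z l) := by
  ext w
  simp [sum_range_sub fun l ↦ (truncatedInd m Z l : (Fin n → ZMod b) → ℝ), truncatedInd,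
    Nat.div_eq_of_lt hZ]

variable [NeZero b]

theorem truncatedInd_dependsOn (m Z l : ℕ) :
    DependsOn (truncatedInd m Z l : (Fin n → ZMod b) → ℝ) (digitWindow n l 0) :=
  dependsOn_digitWindow fun v w h ↦ by
    rw [truncatedInd, truncatedInd, lead_eq_lead_iff.mpr fun i hi ↦ h i (.inl hi)]

theorem abs_anchoredInd_sub_truncatedInd_le {l : ℕ} (hl : l ≤ m) (Z : ℕ) (w : Fin n → ZMod b) :
    |anchoredInd m Z w - truncatedInd m Z l w| ≤ badicInd l (Z / b ^ (m - l)) w := by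
  have lead_div : lead w m / b ^ (m - l) = lead w l := by
    rw [← lead_add_div w l (m - l), Nat.add_sub_cancel' hl]
  refine abs_ite_sub_truncatedInd_le (fun h ↦ ?_) fun h ↦ ?_
  · exact (Nat.lt_of_div_lt_div (lead_div.trans_lt h)).le
  · exact (Nat.lt_of_div_lt_div (h.trans_eq lead_div.symm)).not_ge

theorem abs_truncatedInd_succ_sub_le {l : ℕ} (hl : l < m) (Z : ℕ) (w : Fin n → ZMod b) :
    |truncatedInd m Z (l + 1) w - truncatedInd m Z l w| ≤ badicInd l (Z / b ^ (m - l)) w := by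
  have lead_div : lead w (l + 1) / b = lead w l := by simpa using lead_add_div w l 1
  have div_div : Z / b ^ (m - l) = Z / b ^ (m - (l + 1)) / b := by
    rw [Nat.div_div_eq_div_mul, ← pow_succ]
    congr 2
    omega
  refine abs_ite_sub_truncatedInd_le (fun h ↦ ?_) fun h ↦ ?_
  · exact Nat.lt_of_div_lt_div (lead_div.trans_lt (h.trans_eq div_div))
  · exact (Nat.lt_of_div_lt_div ((div_div.symm.trans_lt h).trans_eq lead_div.symm)).not_gt

variable {C₁ C₂ : Matrix (Fin n) (Fin m) (ZMod b)} {c j Y : ℕ} {f : ℕ → (Fin n → ZMod b) → ℝ}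

theorem abs_bias_sum_le (hb : 2 ≤ b) (hC : IsDickUniform t C₁ C₂) (hmn : m ≤ n)
    (hf : IsDigitSeries c j Y f) {a d Z : ℕ} (hcd : c + d ≤ m) {g : (Fin n → ZMod b) → ℝ}
    (hg : ∀ w, |g w| ≤ badicInd d Z w) (hfg : ∀ i < a, bias C₁ C₂ (f i) g = 0) (N : ℕ) {s : ℕ}
    (hs : m + s ≤ t + 2 + (c + d + a)) :
    |bias C₁ C₂ (∑ i ∈ range N, f i) g| ≤
      4 * (b : ℝ) ^ (2 * t + 3) / (b : ℝ) ^ m / (b : ℝ) ^ s := by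
  have hb1 : (1 : ℝ) ≤ b := mod_cast one_le_two.trans hb
  have term_le (i : ℕ) : |bias C₁ C₂ (f i) g| ≤
      2 * (b : ℝ) ^ (t + 1) / (b : ℝ) ^ (c + d) / (b : ℝ) ^ i := by
    refine (abs_bias_le hC hmn hcd (by positivity) (hf.abs_le i) hg).trans_eq ?_
    rw [pow_succ]
    field_simp
  rw [map_sum, LinearMap.sum_apply]
  calc |∑ i ∈ range N, bias C₁ C₂ (f i) g|
      ≤ 2 * (2 * (b : ℝ) ^ (t + 1) / (b : ℝ) ^ (c + d)) / (b : ℝ) ^ a :=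
        abs_sum_le_of_geometric hb (by positivity) hfg fun i _ ↦ term_le i
    _ = 4 * (b : ℝ) ^ (t + 1) / (b : ℝ) ^ (c + d + a) := by
        rw [pow_add _ (c + d)]
        field_simp
        norm_num
    _ ≤ 4 * (b : ℝ) ^ (2 * t + 3) / (b : ℝ) ^ m / (b : ℝ) ^ s := by
        rw [div_div, ← pow_add, div_le_div_iff₀ (by positivity) (by positivity),
          mul_assoc, mul_assoc, ← pow_add, ← pow_add]
        exact mul_le_mul_of_nonneg_left (pow_le_pow_right₀ hb1 (by omega)) (by norm_num)

theorem abs_bias_layer_le (hb : 2 ≤ b) (hC : IsDickUniform t C₁ C₂) (hmn : m ≤ n) (hcj : c ≤ j)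
    (hjc : j ≤ c + 1) (hf : IsDigitSeries c j Y f) {l : ℕ} (hl : j + l < m) (Z N : ℕ) :
    |bias C₁ C₂ (∑ i ∈ range N, f i) (truncatedInd m Z (l + 1) - truncatedInd m Z l)| ≤
      4 * (b : ℝ) ^ (2 * t + 3) / (b : ℝ) ^ m / (b : ℝ) ^ (m - (j + l)) := by
  have layer_dependsOn : DependsOn
      (truncatedInd m Z (l + 1) - truncatedInd m Z l : (Fin n → ZMod b) → ℝ)
      (digitWindow n (l + 1) 0) := fun v w h ↦
    congrArg₂ (· - ·) (truncatedInd_dependsOn m Z (l + 1) h) <|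
      truncatedInd_dependsOn m Z l fun q hq ↦ h q (.inl (by obtain hq | hq := hq <;> omega))
  -- The terms with `2 * j + i + 2 * (l + 1) ≤ 2 * m - t` vanish.
  refine abs_bias_sum_le hb hC hmn hf (a := 2 * m - t - (2 * j + 2 * l + 1)) (by omega)
    (abs_truncatedInd_succ_sub_le (by omega) Z) (fun i hi ↦ ?_) N (by omega)
  exact hC j i (l + 1) 0 (by omega) _ _ (hf.dependsOn i) layer_dependsOn

theorem abs_bias_remainder_le (hb : 2 ≤ b) (hC : IsDickUniform t C₁ C₂) (hmn : m ≤ n)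
    (hcj : c ≤ j) (hjc : j ≤ c + 1) (hjm : j ≤ m) (hf : IsDigitSeries c j Y f) (Z N : ℕ) :
    |bias C₁ C₂ (∑ i ∈ range N, f i) (anchoredInd m Z - truncatedInd m Z (m - j))| ≤
      4 * (b : ℝ) ^ (2 * t + 3) / (b : ℝ) ^ m := by
  refine (abs_bias_sum_le hb hC hmn hf (a := 0) (s := 0) (by omega)
    (abs_anchoredInd_sub_truncatedInd_le (Nat.sub_le m j) Z) (by simp) N (by omega)).trans_eq ?_
  rw [pow_zero, div_one]

theorem abs_bias_sum_anchoredInd_le (hb : 2 ≤ b) (hC : IsDickUniform t C₁ C₂) (hmn : m ≤ n)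
    (hcj : c ≤ j) (hjc : j ≤ c + 1) (hjm : j ≤ m) (hf : IsDigitSeries c j Y f) {Z : ℕ}
    (hZ : Z < b ^ m) (N : ℕ) :
    |bias C₁ C₂ (∑ i ∈ range N, f i) (anchoredInd m Z)| ≤
      12 * (b : ℝ) ^ (2 * t + 3) / (b : ℝ) ^ m := by
  set B : ℝ := 4 * (b : ℝ) ^ (2 * t + 3) / (b : ℝ) ^ m with hB
  have remainder_le := abs_bias_remainder_le hb hC hmn hcj hjc hjm hf Z N
  have layer_le (l : ℕ) (hl : j + l < m) := abs_bias_layer_le hb hC hmn hcj hjc hf hl Z N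
  set F := ∑ i ∈ range N, f i
  have layers_le : |∑ l ∈ range (m - j),
      bias C₁ C₂ F (truncatedInd m Z (l + 1) - truncatedInd m Z l)| ≤ 2 * B / (b : ℝ) ^ 0 := by
    rw [← sum_range_reflect]
    refine abs_sum_le_of_geometric hb (by positivity) (by simp) fun i hi ↦ ?_
    refine (layer_le _ (by omega)).trans ?_
    have hb1 : (1 : ℝ) ≤ b := mod_cast one_le_two.trans hb
    exact div_le_div_of_nonneg_left (by positivity) (by positivity)
      (pow_le_pow_right₀ hb1 (by omega))
  rw [anchoredInd_eq_add_sum hZ (m - j), map_add, map_sum (bias C₁ C₂ F)]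
  refine (abs_add_le _ _).trans ((add_le_add remainder_le layers_le).trans_eq ?_)
  rw [hB]
  ring

end Correlation

section AnchoredMean

variable {b n m t : ℕ}

/-- The mean, over the `K < b ^ m` whose `j` leading digits form the integer `Y`, of the indicator
functions `anchoredInd m K`. As `j` increases these means form a martingale in `K`. -/
noncomputable def anchoredMean (m j Y : ℕ) (v : Fin n → ZMod b) : ℝ :=
  anchoredInd j Y v - badicInd j Y v * tail v j (m - j)

/-- The terms of the martingale increment `anchoredMean m (j + 1) (b * Y + η) - anchoredMean m j Y`,
arranged by the digit after the first `j + 1` digits that they involve. -/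
noncomputable def incrementTerm (j Y η : ℕ) : ℕ → (Fin n → ZMod b) → ℝ
  | 0, v => anchoredInd (j + 1) (b * Y + η) v - anchoredInd j Y v + badicInd j Y v * digit v j / b
  | i + 1, v => (badicInd j Y v / b - badicInd (j + 1) (b * Y + η) v) *
      (digit v (j + 1 + i) / (b : ℝ) ^ (i + 1))

/-- The terms of `anchoredMean m 0 0 = 1 - tail v 0 m`, arranged by the digit they involve. -/
noncomputable def initialTerm : ℕ → (Fin n → ZMod b) → ℝ
  | 0, _ => 1
  | i + 1, v => -(digit v i / (b : ℝ) ^ (i + 1))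

theorem anchoredMean_self (m Y : ℕ) :
    (anchoredMean m m Y : (Fin n → ZMod b) → ℝ) = anchoredInd m Y := by
  ext v
  simp [anchoredMean, tail]

theorem anchoredMean_zero_eq_sum (m : ℕ) :
    (anchoredMean m 0 0 : (Fin n → ZMod b) → ℝ) = ∑ i ∈ range (m + 1), initialTerm i := by
  ext v
  rw [Finset.sum_apply, sum_range_succ']
  simp only [anchoredMean, anchoredInd, badicInd, lead, tail, initialTerm, le_refl, if_true,
    one_mul, Nat.sub_zero, zero_add, sum_neg_distrib]
  ring

variable [NeZero b]

theorem anchoredInd_succ (j Y : ℕ) {η : ℕ} (hη : η < b) (v : Fin n → ZMod b) :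
    anchoredInd (j + 1) (b * Y + η) v =
      if lead v j = Y then (if digit v j ≤ η then 1 else 0) else anchoredInd j Y v := by
  have hd := digit_lt v j
  have lead_succ : lead v (j + 1) = b * lead v j + digit v j := rfl
  obtain h | rfl | h := lt_trichotomy (lead v j) Y
  · have := Nat.mul_le_mul_left b (Nat.succ_le_of_lt h)
    have hle : lead v (j + 1) ≤ b * Y + η := by rw [Nat.mul_succ] at this; omega
    simp [anchoredInd, h.ne, h.le, hle]
  · simp [anchoredInd, lead_succ]
  · have := Nat.mul_le_mul_left b (Nat.succ_le_of_lt h)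
    have hgt : b * Y + η < lead v (j + 1) := by rw [Nat.mul_succ] at this; omega
    simp [anchoredInd, h.ne', h.not_ge, hgt.not_ge]

theorem badicInd_succ (j Y : ℕ) {η : ℕ} (hη : η < b) (v : Fin n → ZMod b) :
    badicInd (j + 1) (b * Y + η) v =
      if lead v j = Y then (if digit v j = η then 1 else 0) else 0 := by
  have lead_succ : lead v (j + 1) = b * lead v j + digit v j := rfl
  split_ifs with h hd
  · simp [badicInd, lead_succ, h, hd]
  · simp [badicInd, lead_succ, h, hd]
  · refine if_neg fun heq ↦ h ?_
    have quotients := congrArg (· / b) heq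
    simpa [lead_succ, Nat.mul_add_div (Nat.pos_of_neZero b), Nat.div_eq_of_lt hη,
      Nat.div_eq_of_lt (digit_lt v j)] using quotients

theorem mul_tail_of_lt {j : ℕ} (hj : j < m) (v : Fin n → ZMod b) :
    b * tail v j (m - j) = digit v j + tail v (j + 1) (m - (j + 1)) := by
  rw [← mul_tail_succ, Nat.sub_add_eq, Nat.sub_add_cancel (Nat.sub_pos_of_lt hj)]

theorem sum_anchoredMean_succ {j : ℕ} (hj : j < m) (Y : ℕ) :
    ∑ η ∈ range b, (anchoredMean m (j + 1) (b * Y + η) : (Fin n → ZMod b) → ℝ) =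
      (b : ℝ) • anchoredMean m j Y := by
  ext v
  have hd := digit_lt v j
  have sum_le : ∑ η ∈ range b, (if digit v j ≤ η then (1 : ℝ) else 0) = b - digit v j := by
    have : (range b).filter (digit v j ≤ ·) = Ico (digit v j) b := by grind
    rw [sum_boole, this, Nat.card_Ico, Nat.cast_sub hd.le]
  have mean_succ : ∀ η ∈ range b, anchoredMean m (j + 1) (b * Y + η) v =
      if lead v j = Y then (if digit v j ≤ η then 1 else 0) -
        (if digit v j = η then 1 else 0) * tail v (j + 1) (m - (j + 1))
      else anchoredInd j Y v := by
    intro η hη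
    rw [anchoredMean, anchoredInd_succ j Y (mem_range.mp hη), badicInd_succ j Y (mem_range.mp hη)]
    split_ifs <;> ring
  rw [Finset.sum_apply, sum_congr rfl mean_succ, Pi.smul_apply, smul_eq_mul, anchoredMean, mul_sub,
    mul_left_comm, mul_tail_of_lt hj]
  by_cases h : lead v j = Y
  · simp only [h, if_true, sum_sub_distrib, sum_le, ← sum_mul, sum_ite_eq, mem_range, hd, one_mul]
    simp only [anchoredInd, badicInd, h, if_true, le_refl]
    ring
  · simp [h, badicInd]

theorem anchoredMean_succ_sub {j : ℕ} (hj : j < m) (Y η : ℕ) :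
    (anchoredMean m (j + 1) (b * Y + η) - anchoredMean m j Y : (Fin n → ZMod b) → ℝ) =
      ∑ i ∈ range (m - j), incrementTerm j Y η i := by
  ext v
  have hb : (b : ℝ) ≠ 0 := Nat.cast_ne_zero.mpr (NeZero.ne b)
  have tail_eq : tail v j (m - j) = (digit v j + tail v (j + 1) (m - (j + 1))) / b := by
    rw [← mul_tail_of_lt hj, mul_div_cancel_left₀ _ hb]
  obtain ⟨N, hN⟩ : ∃ N, m - j = N + 1 := ⟨m - (j + 1), by omega⟩
  have hN' : m - (j + 1) = N := by omega
  simp only [Finset.sum_apply, hN, sum_range_succ', incrementTerm, ← mul_sum]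
  rw [Pi.sub_apply, anchoredMean, anchoredMean, tail_eq, hN', tail]
  ring

theorem abs_incrementTerm_le (j Y : ℕ) {η : ℕ} (hη : η < b) (i : ℕ) (v : Fin n → ZMod b) :
    |incrementTerm j Y η i v| ≤ b / (b : ℝ) ^ i * badicInd j Y v := by
  have hb : (1 : ℝ) ≤ b := Nat.one_le_cast.mpr (Nat.pos_of_neZero b)
  have digit_le (q : ℕ) : (digit v q : ℝ) ≤ b := mod_cast (digit_lt v q).le
  by_cases h : lead v j = Y
  · cases i with
    | zero =>
      have digit_div_le : digit v j / (b : ℝ) ≤ 1 := div_le_one_of_le₀ (digit_le j) (by positivity)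
      have digit_div_nonneg : 0 ≤ digit v j / (b : ℝ) := by positivity
      rw [incrementTerm, anchoredInd_succ j Y hη]
      simp only [anchoredInd, badicInd, h, if_true, le_refl, one_mul, mul_one, pow_zero, div_one]
      split_ifs <;> rw [abs_le] <;> constructor <;> linarith
    | succ i =>
      have inv_le : 1 / (b : ℝ) ≤ 1 := div_le_one_of_le₀ (by linarith) (by positivity)
      have inv_nonneg : 0 ≤ 1 / (b : ℝ) := by positivity
      have factor_le : |badicInd j Y v / b - badicInd (j + 1) (b * Y + η) v| ≤ 1 := by
        rw [badicInd_succ j Y hη]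
        simp only [badicInd, h, if_true]
        split_ifs <;> rw [abs_le] <;> constructor <;> linarith
      have weight_nonneg : 0 ≤ (digit v (j + 1 + i) : ℝ) / (b : ℝ) ^ (i + 1) := by positivity
      rw [incrementTerm, abs_mul, abs_of_nonneg weight_nonneg]
      refine (mul_le_of_le_one_left weight_nonneg factor_le).trans ?_
      rw [badicInd, if_pos h, mul_one]
      gcongr
      exact (digit_lt v _).le
  · have badicInd_eq : badicInd j Y v = 0 := if_neg h
    cases i with
    | zero => simp [incrementTerm, anchoredInd_succ j Y hη, badicInd_eq, h]
    | succ i => simp [incrementTerm, badicInd_succ j Y hη, badicInd_eq, h]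

theorem isDigitSeries_incrementTerm (j Y : ℕ) {η : ℕ} (hη : η < b) :
    IsDigitSeries j (j + 1) Y (incrementTerm j Y η : ℕ → (Fin n → ZMod b) → ℝ) := by
  refine ⟨fun i ↦ dependsOn_digitWindow fun v w h ↦ ?_, abs_incrementTerm_le j Y hη⟩
  have lead_eq : lead v j = lead w j := lead_eq_lead_iff.mpr fun i hi ↦ h i (.inl (by omega))
  have lead_succ_eq : lead v (j + 1) = lead w (j + 1) :=
    lead_eq_lead_iff.mpr fun i hi ↦ h i (.inl hi)
  cases i with
  | zero => simp only [incrementTerm, anchoredInd, badicInd, lead_eq, lead_succ_eq,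
      h j (.inl (by omega))]
  | succ i => simp only [incrementTerm, badicInd, lead_eq, lead_succ_eq,
      h (j + 1 + i) (.inr (by omega))]

theorem isDigitSeries_initialTerm :
    IsDigitSeries 0 0 0 (initialTerm : ℕ → (Fin n → ZMod b) → ℝ) := by
  refine ⟨fun i ↦ dependsOn_digitWindow fun v w h ↦ ?_, fun i v ↦ ?_⟩
  · cases i with
    | zero => rfl
    | succ i => rw [initialTerm, initialTerm, h i (.inr (by omega))]
  · have hb : (1 : ℝ) ≤ b := Nat.one_le_cast.mpr (Nat.pos_of_neZero b)
    simp only [badicInd, lead, if_true, mul_one]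
    cases i with
    | zero => simpa [initialTerm] using hb
    | succ i =>
      rw [initialTerm, abs_neg, abs_of_nonneg (by positivity)]
      gcongr
      exact mod_cast (digit_lt v i).le

end AnchoredMean

section Martingale

theorem sum_range_mul {α : Type*} [AddCommMonoid α] (b N : ℕ) (f : ℕ → α) :
    ∑ k ∈ range (b * N), f k = ∑ Y ∈ range N, ∑ η ∈ range b, f (b * Y + η) := by
  induction N with
  | zero => simp
  | succ N ih => rw [Nat.mul_succ, sum_range_add, ih, sum_range_succ]

theorem sum_exp_le_of_sum_eq_zero {ι : Type*} {s : Finset ι} {x : ι → ℝ} {c : ℝ}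
    (hx : ∀ i ∈ s, |x i| ≤ c) (hsum : ∑ i ∈ s, x i = 0) :
    ∑ i ∈ s, Real.exp (x i) ≤ s.card * Real.exp (c ^ 2 / 2) := by
  have exp_le : ∀ i ∈ s, Real.exp (x i) ≤ Real.cosh c + x i / c * Real.sinh c := by
    intro i hi
    have ratio_mul : x i / c * c = x i := div_mul_cancel_of_imp fun hc ↦
      abs_nonpos_iff.mp ((hx i hi).trans_eq hc)
    have abs_ratio_le : |x i / c| ≤ 1 := by
      rw [abs_div]
      exact div_le_one_of_le₀ ((hx i hi).trans (le_abs_self c)) (abs_nonneg c)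
    calc Real.exp (x i) = Real.exp (x i / c * c) := by rw [ratio_mul]
      _ ≤ _ := Real.exp_mul_le_cosh_add_mul_sinh abs_ratio_le c
  calc ∑ i ∈ s, Real.exp (x i) ≤ ∑ i ∈ s, (Real.cosh c + x i / c * Real.sinh c) :=
        sum_le_sum exp_le
    _ = s.card * Real.cosh c := by
        rw [sum_add_distrib, ← sum_mul, ← sum_div, hsum, sum_const, nsmul_eq_mul]
        ring
    _ ≤ s.card * Real.exp (c ^ 2 / 2) := by
        gcongr
        exact Real.cosh_le_exp_half_sq c

/-- `M` is a martingale for the `b`-adic filtration with increments bounded by `c` up to time `m`.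
The value `M j Y` is the one taken on the `Y`-th `b`-adic interval of length `b ^ (-j)`. -/
structure IsBadicMartingale (b m : ℕ) (c : ℝ) (M : ℕ → ℕ → ℝ) : Prop where
  sum_succ : ∀ j < m, ∀ Y, ∑ η ∈ range b, M (j + 1) (b * Y + η) = b * M j Y
  abs_succ_sub_le : ∀ j < m, ∀ Y, ∀ η < b, |M (j + 1) (b * Y + η) - M j Y| ≤ c

namespace IsBadicMartingale

variable {b m : ℕ} {c : ℝ} {M : ℕ → ℕ → ℝ}

theorem neg (hM : IsBadicMartingale b m c M) : IsBadicMartingale b m c (-M) where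
  sum_succ j hj Y := by
    simp only [Pi.neg_apply, sum_neg_distrib, hM.sum_succ j hj Y, mul_neg]
  abs_succ_sub_le j hj Y η hη := by
    rw [Pi.neg_apply, Pi.neg_apply, Pi.neg_apply, Pi.neg_apply, neg_sub_neg, abs_sub_comm]
    exact hM.abs_succ_sub_le j hj Y η hη

theorem div_const (hM : IsBadicMartingale b m c M) {σ : ℝ} (hσ : 0 ≤ σ) :
    IsBadicMartingale b m (c / σ) fun j Y ↦ M j Y / σ where
  sum_succ j hj Y := by rw [← sum_div, hM.sum_succ j hj Y, mul_div_assoc]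
  abs_succ_sub_le j hj Y η hη := by
    rw [← sub_div, abs_div, abs_of_nonneg hσ]
    exact div_le_div_of_nonneg_right (hM.abs_succ_sub_le j hj Y η hη) hσ

theorem sum_exp_succ_le (hM : IsBadicMartingale b m c M) {j : ℕ} (hj : j < m) (Y : ℕ) :
    ∑ η ∈ range b, Real.exp (M (j + 1) (b * Y + η)) ≤
      b * Real.exp (c ^ 2 / 2) * Real.exp (M j Y) := by
  have increments := sum_exp_le_of_sum_eq_zero (s := range b)
    (fun η hη ↦ hM.abs_succ_sub_le j hj Y η (mem_range.mp hη))
    (by rw [sum_sub_distrib, hM.sum_succ j hj Y, sum_const, card_range, nsmul_eq_mul, sub_self])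
  rw [card_range] at increments
  calc ∑ η ∈ range b, Real.exp (M (j + 1) (b * Y + η))
      = (∑ η ∈ range b, Real.exp (M (j + 1) (b * Y + η) - M j Y)) * Real.exp (M j Y) := by
        simp only [sum_mul, ← Real.exp_add, sub_add_cancel]
    _ ≤ b * Real.exp (c ^ 2 / 2) * Real.exp (M j Y) := by gcongr

theorem sum_exp_le (hM : IsBadicMartingale b m c M) {j : ℕ} (hj : j ≤ m) :
    ∑ Y ∈ range (b ^ j), Real.exp (M j Y) ≤
      (b : ℝ) ^ j * Real.exp (M 0 0 + j * (c ^ 2 / 2)) := by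
  induction j with
  | zero => simp
  | succ j ih =>
    calc ∑ Y ∈ range (b ^ (j + 1)), Real.exp (M (j + 1) Y)
        = ∑ Y ∈ range (b ^ j), ∑ η ∈ range b, Real.exp (M (j + 1) (b * Y + η)) := by
          rw [pow_succ', sum_range_mul]
      _ ≤ ∑ Y ∈ range (b ^ j), b * Real.exp (c ^ 2 / 2) * Real.exp (M j Y) :=
          sum_le_sum fun Y _ ↦ hM.sum_exp_succ_le hj Y
      _ ≤ b * Real.exp (c ^ 2 / 2) * ((b : ℝ) ^ j * Real.exp (M 0 0 + j * (c ^ 2 / 2))) := by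
          rw [← mul_sum]
          exact mul_le_mul_of_nonneg_left (ih (Nat.le_of_succ_le hj)) (by positivity)
      _ = (b : ℝ) ^ (j + 1) * Real.exp (M 0 0 + (j + 1 : ℕ) * (c ^ 2 / 2)) := by
          rw [Nat.cast_succ, add_one_mul, ← add_assoc, Real.exp_add _ (c ^ 2 / 2)]
          ring

theorem sum_exp_abs_le (hM : IsBadicMartingale b m c M) :
    ∑ Y ∈ range (b ^ m), Real.exp |M m Y| ≤
      2 * (b : ℝ) ^ m * Real.exp (|M 0 0| + m * (c ^ 2 / 2)) := by
  have upper := hM.sum_exp_le le_rfl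
  have lower := hM.neg.sum_exp_le le_rfl
  calc ∑ Y ∈ range (b ^ m), Real.exp |M m Y|
      ≤ ∑ Y ∈ range (b ^ m), (Real.exp (M m Y) + Real.exp (-M m Y)) :=
        sum_le_sum fun Y _ ↦ Real.exp_abs_le _
    _ ≤ (b : ℝ) ^ m * Real.exp (M 0 0 + m * (c ^ 2 / 2)) +
          (b : ℝ) ^ m * Real.exp (-M 0 0 + m * (c ^ 2 / 2)) := by
        rw [sum_add_distrib]
        exact add_le_add upper lower
    _ ≤ (b : ℝ) ^ m * Real.exp (|M 0 0| + m * (c ^ 2 / 2)) +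
          (b : ℝ) ^ m * Real.exp (|M 0 0| + m * (c ^ 2 / 2)) := by
        gcongr
        · exact le_abs_self _
        · exact neg_le_abs _
    _ = 2 * (b : ℝ) ^ m * Real.exp (|M 0 0| + m * (c ^ 2 / 2)) := by ring

end IsBadicMartingale

end Martingale

section ExponentialBound

variable {b n m t : ℕ} [NeZero b] {C₁ C₂ : Matrix (Fin n) (Fin m) (ZMod b)}

theorem isBadicMartingale_bias (hb : 2 ≤ b) (hC : IsDickUniform t C₁ C₂) (hmn : m ≤ n) {Z : ℕ}
    (hZ : Z < b ^ m) :
    IsBadicMartingale b m (12 * (b : ℝ) ^ (2 * t + 3) / (b : ℝ) ^ m)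
      fun j Y ↦ bias C₁ C₂ (anchoredMean m j Y) (anchoredInd m Z) where
  sum_succ j hj Y := by
    rw [← LinearMap.sum_apply, ← map_sum, sum_anchoredMean_succ hj, map_smul, LinearMap.smul_apply,
      smul_eq_mul]
  abs_succ_sub_le j hj Y η hη := by
    rw [← LinearMap.sub_apply, ← map_sub, anchoredMean_succ_sub hj]
    exact abs_bias_sum_anchoredInd_le hb hC hmn j.le_succ le_rfl hj
      (isDigitSeries_incrementTerm j Y hη) hZ _

theorem abs_bias_anchoredMean_zero_le (hb : 2 ≤ b) (hC : IsDickUniform t C₁ C₂) (hmn : m ≤ n)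
    {Z : ℕ} (hZ : Z < b ^ m) :
    |bias C₁ C₂ (anchoredMean m 0 0) (anchoredInd m Z)| ≤
      12 * (b : ℝ) ^ (2 * t + 3) / (b : ℝ) ^ m := by
  rw [anchoredMean_zero_eq_sum]
  exact abs_bias_sum_anchoredInd_le hb hC hmn le_rfl (Nat.zero_le _) (Nat.zero_le m)
    isDigitSeries_initialTerm hZ _

theorem sum_exp_abs_bias_div_le (hb : 2 ≤ b) (hC : IsDickUniform t C₁ C₂) (hm : 1 ≤ m)
    (hmn : m ≤ n) {Z : ℕ} (hZ : Z < b ^ m) :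
    ∑ Y ∈ range (b ^ m), Real.exp |bias C₁ C₂ (anchoredInd m Y) (anchoredInd m Z) /
        (12 * (b : ℝ) ^ (2 * t + 3) / (b : ℝ) ^ m * √m)| ≤
      2 * Real.exp (3 / 2) * (b ^ m : ℕ) := by
  set B := 12 * (b : ℝ) ^ (2 * t + 3) / (b : ℝ) ^ m with hB
  have hB_pos : 0 < B := by
    have : 0 < (b : ℝ) := by positivity
    positivity
  have one_le_sqrt : 1 ≤ √(m : ℝ) := Real.one_le_sqrt.mpr (mod_cast hm)
  have hσ : 0 < B * √m := mul_pos hB_pos (one_pos.trans_le one_le_sqrt)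
  have initial_le : |bias C₁ C₂ (anchoredMean m 0 0) (anchoredInd m Z) / (B * √m)| ≤ 1 := by
    rw [abs_div, abs_of_pos hσ]
    exact div_le_one_of_le₀ ((abs_bias_anchoredMean_zero_le hb hC hmn hZ).trans
      (le_mul_of_one_le_right hB_pos.le one_le_sqrt)) hσ.le
  have variance_eq : m * ((B / (B * √m)) ^ 2 / 2) = 1 / 2 := by
    rw [div_mul_cancel_left₀ hB_pos.ne', inv_pow, Real.sq_sqrt m.cast_nonneg]
    field_simp
  have azuma := ((isBadicMartingale_bias hb hC hmn hZ).div_const hσ.le).sum_exp_abs_le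
  simp only [anchoredMean_self, ← hB, variance_eq] at azuma
  refine azuma.trans ?_
  rw [Nat.cast_pow, mul_right_comm]
  gcongr
  linarith

end ExponentialBound

section CellBounds

variable {b n m t : ℕ}

/-- The indicator function of `[0, y)`, as a function of the digit vector of a point. -/
noncomputable def belowInd (y : ℝ) (v : Fin n → ZMod b) : ℝ :=
  if tail v 0 n < y then 1 else 0

theorem abs_belowInd_le_one (y : ℝ) (v : Fin n → ZMod b) : |belowInd y v| ≤ 1 := by
  unfold belowInd
  split_ifs <;> norm_num

theorem abs_anchoredInd_le_one (m Z : ℕ) (w : Fin n → ZMod b) : |anchoredInd m Z w| ≤ 1 := by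
  unfold anchoredInd
  split_ifs <;> norm_num

variable [NeZero b]

theorem abs_belowInd_sub_anchoredInd_le (hmn : m ≤ n) {y : ℝ} (hy : 0 ≤ y)
    (v : Fin n → ZMod b) :
    |belowInd y v - anchoredInd m ⌊(b : ℝ) ^ m * y⌋₊ v| ≤ badicInd m ⌊(b : ℝ) ^ m * y⌋₊ v := by
  have hb : (0 : ℝ) < (b : ℝ) ^ m := pow_pos (Nat.cast_pos.mpr (Nat.pos_of_neZero b)) m
  have point_eq : (b : ℝ) ^ m * tail v 0 n = lead v m + tail v m (n - m) := by
    rw [← pow_mul_tail_zero, Nat.add_sub_cancel' hmn]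
  have floor_le : (⌊(b : ℝ) ^ m * y⌋₊ : ℝ) ≤ (b : ℝ) ^ m * y := Nat.floor_le (by positivity)
  have lt_floor := Nat.lt_floor_add_one ((b : ℝ) ^ m * y)
  set k := ⌊(b : ℝ) ^ m * y⌋₊
  obtain h | h | h := lt_trichotomy (lead v m) k
  · have hlt : tail v 0 n < y := by
      have : (lead v m : ℝ) + 1 ≤ k := mod_cast h
      refine lt_of_mul_lt_mul_left ?_ hb.le
      linarith [tail_lt_one v m (n - m)]
    simp [belowInd, anchoredInd, badicInd, h.ne, h.le, hlt]
  · simp only [belowInd, anchoredInd, badicInd, h, le_refl, if_true]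
    split_ifs <;> norm_num
  · have hle : y ≤ tail v 0 n := by
      have : (k : ℝ) + 1 ≤ lead v m := mod_cast h
      refine le_of_mul_le_mul_left ?_ hb
      linarith [tail_nonneg v m (n - m)]
    simp [belowInd, anchoredInd, badicInd, h.ne', h.not_ge, hle.not_gt]

theorem expect_anchoredInd (hmn : m ≤ n) {Z : ℕ} (hZ : Z < b ^ m) :
    𝔼 w : Fin n → ZMod b, anchoredInd m Z w = (Z + 1) / (b : ℝ) ^ m := by
  have : (range (b ^ m)).filter (· ≤ Z) = range (Z + 1) := by grind
  simp only [anchoredInd]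
  rw [expect_lead hmn fun X ↦ if X ≤ Z then (1 : ℝ) else 0, expect_eq_sum_div_card, sum_boole, this,
    card_range, card_range, Nat.cast_succ, Nat.cast_pow]

theorem abs_mul_sub_mul_le {x x' y y' : ℝ} (hy : |y| ≤ 1) (hx' : |x'| ≤ 1) :
    |x * y - x' * y'| ≤ |x - x'| + |y - y'| :=
  calc |x * y - x' * y'| = |(x - x') * y + x' * (y - y')| := by congr 1; ring
    _ ≤ |x - x'| * |y| + |x'| * |y - y'| := by
        rw [← abs_mul, ← abs_mul]
        exact abs_add_le _ _
    _ ≤ |x - x'| + |y - y'| :=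
        add_le_add (mul_le_of_le_one_right (abs_nonneg _) hy)
          (mul_le_of_le_one_left (abs_nonneg _) hx')

theorem floor_mul_lt {N : ℕ} (hN : 0 < N) {x : ℝ} (hx : x ∈ Set.Ico 0 1) : ⌊N * x⌋₊ < N := by
  have hN' : (0 : ℝ) < N := Nat.cast_pos.mpr hN
  rw [Nat.floor_lt (mul_nonneg hN'.le hx.1)]
  exact mul_lt_of_lt_one_right hN' hx.2

theorem abs_floor_succ_mul_sub_le {N : ℕ} (hN : 0 < N) {y z : ℝ} (hy : y ∈ Set.Ico 0 1)
    (hz : z ∈ Set.Ico 0 1) :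
    |(⌊N * y⌋₊ + 1) / (N : ℝ) * ((⌊N * z⌋₊ + 1) / N) - y * z| ≤ 2 / N := by
  have hN' : (0 : ℝ) < N := Nat.cast_pos.mpr hN
  have dist_le {x : ℝ} (hx : 0 ≤ x) : |(⌊N * x⌋₊ + 1) / (N : ℝ) - x| ≤ 1 / N := by
    have floor_le := Nat.floor_le (mul_nonneg hN'.le hx)
    have lt_floor := Nat.lt_floor_add_one (N * x)
    rw [div_sub' hN'.ne', abs_div, abs_of_pos hN']
    gcongr
    rw [abs_le]
    constructor <;> linarith
  have abs_le_one : |(⌊N * z⌋₊ + 1) / (N : ℝ)| ≤ 1 := by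
    rw [abs_of_nonneg (by positivity), div_le_one₀ hN']
    exact mod_cast floor_mul_lt hN hz
  calc |(⌊N * y⌋₊ + 1) / (N : ℝ) * ((⌊N * z⌋₊ + 1) / N) - y * z|
      ≤ |(⌊N * y⌋₊ + 1) / (N : ℝ) - y| + |(⌊N * z⌋₊ + 1) / (N : ℝ) - z| :=
        abs_mul_sub_mul_le abs_le_one (abs_le.mpr ⟨by linarith [hy.1], hy.2.le⟩)
    _ ≤ 1 / N + 1 / N := add_le_add (dist_le hy.1) (dist_le hz.1)
    _ = 2 / N := by ring

variable {C₁ C₂ : Matrix (Fin n) (Fin m) (ZMod b)}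

theorem abs_expect_belowInd_sub_le (hC : IsDickUniform t C₁ C₂) (hmn : m ≤ n) {y z : ℝ}
    (hy : 0 ≤ y) (hz : 0 ≤ z) :
    |𝔼 a, belowInd y (C₁ *ᵥ a) * belowInd z (C₂ *ᵥ a) -
        𝔼 a, anchoredInd m ⌊(b : ℝ) ^ m * y⌋₊ (C₁ *ᵥ a) *
          anchoredInd m ⌊(b : ℝ) ^ m * z⌋₊ (C₂ *ᵥ a)| ≤ 2 * (b : ℝ) ^ t / (b : ℝ) ^ m := by
  set k := ⌊(b : ℝ) ^ m * y⌋₊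
  set l := ⌊(b : ℝ) ^ m * z⌋₊
  have badicInd_zero (w : Fin n → ZMod b) : badicInd 0 0 w = 1 := if_pos rfl
  have first_strip : 𝔼 a, badicInd m k (C₁ *ᵥ a) ≤ (b : ℝ) ^ t / (b : ℝ) ^ m := by
    simpa only [badicInd_zero, mul_one, add_zero] using
      expect_badicInd_mul_le hC hmn (add_zero m).le k 0
  have second_strip : 𝔼 a, badicInd m l (C₂ *ᵥ a) ≤ (b : ℝ) ^ t / (b : ℝ) ^ m := by
    simpa only [badicInd_zero, one_mul, zero_add] using
      expect_badicInd_mul_le hC hmn (zero_add m).le 0 l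
  rw [← expect_sub_distrib]
  calc |𝔼 a, (belowInd y (C₁ *ᵥ a) * belowInd z (C₂ *ᵥ a) -
          anchoredInd m k (C₁ *ᵥ a) * anchoredInd m l (C₂ *ᵥ a))|
      ≤ 𝔼 a, |belowInd y (C₁ *ᵥ a) * belowInd z (C₂ *ᵥ a) -
          anchoredInd m k (C₁ *ᵥ a) * anchoredInd m l (C₂ *ᵥ a)| := abs_expect_le _ _
    _ ≤ 𝔼 a, (badicInd m k (C₁ *ᵥ a) + badicInd m l (C₂ *ᵥ a)) := by
        refine expect_le_expect fun a _ ↦ ?_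
        exact (abs_mul_sub_mul_le (abs_belowInd_le_one _ _) (abs_anchoredInd_le_one _ _ _)).trans
          (add_le_add (abs_belowInd_sub_anchoredInd_le hmn hy _)
            (abs_belowInd_sub_anchoredInd_le hmn hz _))
    _ ≤ (b : ℝ) ^ t / (b : ℝ) ^ m + (b : ℝ) ^ t / (b : ℝ) ^ m := by
        rw [expect_add_distrib]
        exact add_le_add first_strip second_strip
    _ = 2 * (b : ℝ) ^ t / (b : ℝ) ^ m := by ring

theorem abs_expect_belowInd_sub_mul_le (hC : IsDickUniform t C₁ C₂) (hmn : m ≤ n) {y z : ℝ}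
    (hy : y ∈ Set.Ico 0 1) (hz : z ∈ Set.Ico 0 1) :
    |𝔼 a, belowInd y (C₁ *ᵥ a) * belowInd z (C₂ *ᵥ a) - y * z| ≤
      |bias C₁ C₂ (anchoredInd m ⌊(b : ℝ) ^ m * y⌋₊) (anchoredInd m ⌊(b : ℝ) ^ m * z⌋₊)| +
        4 * (b : ℝ) ^ t / (b : ℝ) ^ m := by
  have hb : (1 : ℝ) ≤ b := Nat.one_le_cast.mpr (Nat.pos_of_neZero b)
  have hN : 0 < b ^ m := pow_pos (Nat.pos_of_neZero b) m
  have floor_lt {x : ℝ} (hx : x ∈ Set.Ico 0 1) : ⌊(b : ℝ) ^ m * x⌋₊ < b ^ m := by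
    exact_mod_cast floor_mul_lt hN hx
  have volume_error := abs_floor_succ_mul_sub_le hN hy hz
  rw [Nat.cast_pow, ← expect_anchoredInd hmn (floor_lt hy), ← expect_anchoredInd hmn (floor_lt hz)]
    at volume_error
  have point_error := abs_expect_belowInd_sub_le hC hmn hy.1 hz.1
  have two_le : 2 / (b : ℝ) ^ m ≤ 2 * (b : ℝ) ^ t / (b : ℝ) ^ m := by
    gcongr
    linarith [one_le_pow₀ hb (n := t)]
  rw [bias_apply]
  set k := ⌊(b : ℝ) ^ m * y⌋₊
  set l := ⌊(b : ℝ) ^ m * z⌋₊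
  set P := 𝔼 a, belowInd y (C₁ *ᵥ a) * belowInd z (C₂ *ᵥ a)
  set Q := 𝔼 a, anchoredInd m k (C₁ *ᵥ a) * anchoredInd m l (C₂ *ᵥ a)
  set E := (𝔼 v : Fin n → ZMod b, anchoredInd m k v) * 𝔼 w : Fin n → ZMod b, anchoredInd m l w
  calc |P - y * z| ≤ |P - Q| + (|Q - E| + |E - y * z|) :=
        (abs_sub_le P Q _).trans (by gcongr; exact abs_sub_le Q E _)
    _ ≤ 2 * (b : ℝ) ^ t / (b : ℝ) ^ m + (|Q - E| + 2 * (b : ℝ) ^ t / (b : ℝ) ^ m) := by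
        gcongr
        exact volume_error.trans two_le
    _ = |Q - E| + 4 * (b : ℝ) ^ t / (b : ℝ) ^ m := by ring

end CellBounds

section DigitalNetPoints

variable {b m n : ℕ}

theorem tail_zero_eq_sum (v : Fin n → ZMod b) :
    tail v 0 n = ∑ i : Fin n, ((v i).val : ℝ) / (b : ℝ) ^ ((i : ℕ) + 1) := by
  rw [tail, ← Fin.sum_univ_eq_sum_range fun i ↦ (digit v (0 + i) : ℝ) / (b : ℝ) ^ (i + 1)]
  simp [digit]

variable [NeZero b]

theorem natCast_comp_bijective (κ : Type*) :
    Function.Bijective fun (a : κ → Fin b) j ↦ ((a j : ℕ) : ZMod b) := by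
  have natCast_bijective : Function.Bijective fun x : Fin b ↦ ((x : ℕ) : ZMod b) := by
    refine ⟨fun x y h ↦ Fin.ext ?_, fun z ↦ ⟨⟨z.val, z.val_lt⟩, ZMod.natCast_zmod_val z⟩⟩
    simpa only [ZMod.natCast_eq_natCast_iff', Nat.mod_eq_of_lt, x.2, y.2] using h
  exact natCast_bijective.comp_left

theorem discAt_digitalNetPoint (C₁ C₂ : Matrix (Fin n) (Fin m) (ZMod b)) (y : ℝ × ℝ) :
    discAt (digitalNetPoint b m n C₁ C₂) y =
      𝔼 a, belowInd y.1 (C₁ *ᵥ a) * belowInd y.2 (C₂ *ᵥ a) - y.1 * y.2 := by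
  rw [discAt, ← Fintype.expect_bijective _ (natCast_comp_bijective (b := b) (Fin m))
    (fun a ↦ if (digitalNetPoint b m n C₁ C₂ a).1 < y.1 ∧ (digitalNetPoint b m n C₁ C₂ a).2 < y.2
      then (1 : ℝ) else 0) _ fun a ↦ ?_, Fintype.expect_eq_sum_div_card, sum_boole]
  simp only [digitalNetPoint, belowInd, tail_zero_eq_sum]
  rw [ite_zero_mul_ite_zero, mul_one]
  congr

end DigitalNetPoints

section UnitSquare

/-- The cells, indexed by `q.1, q.2 < N`, of the subdivision of `[0, 1)²` into `N²` equal
squares. -/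
def gridCell (N : ℕ) (q : ℕ × ℕ) : Set (ℝ × ℝ) :=
  Set.Ico (q.1 / N : ℝ) ((q.1 + 1) / N) ×ˢ Set.Ico (q.2 / N : ℝ) ((q.2 + 1) / N)

variable {N : ℕ} {f : ℝ × ℝ → ℝ} {G : ℕ → ℕ → ℝ}

theorem measurableSet_gridCell (N : ℕ) (q : ℕ × ℕ) : MeasurableSet (gridCell N q) :=
  measurableSet_Ico.prod measurableSet_Ico

theorem volume_real_gridCell (N : ℕ) (q : ℕ × ℕ) :
    volume.real (gridCell N q) = 1 / (N : ℝ) ^ 2 := by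
  have side (k : ℕ) : volume.real (Set.Ico (k / N : ℝ) ((k + 1) / N)) = 1 / N := by
    rw [Real.volume_real_Ico_of_le (by gcongr; linarith), add_div, add_sub_cancel_left]
  rw [gridCell, Measure.volume_eq_prod, measureReal_prod_prod, side, side]
  ring

theorem mem_Ico_div_iff (hN : 0 < N) {x : ℝ} (hx : 0 ≤ x) {k : ℕ} :
    x ∈ Set.Ico (k / N : ℝ) ((k + 1) / N) ↔ k = ⌊N * x⌋₊ := by
  have hN' : (0 : ℝ) < N := Nat.cast_pos.mpr hN
  rw [eq_comm, Nat.floor_eq_iff (by positivity), Set.mem_Ico, div_le_iff₀' hN', lt_div_iff₀' hN']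

theorem mem_gridCell_iff (hN : 0 < N) {y : ℝ × ℝ}
    (hy : y ∈ Set.Ico (0 : ℝ) 1 ×ˢ Set.Ico (0 : ℝ) 1) {q : ℕ × ℕ} :
    y ∈ gridCell N q ↔ q = (⌊N * y.1⌋₊, ⌊N * y.2⌋₊) := by
  rw [gridCell, Set.mem_prod, mem_Ico_div_iff hN hy.1.1, mem_Ico_div_iff hN hy.2.1, Prod.ext_iff]

theorem gridCell_subset {q : ℕ × ℕ} (hq : q ∈ range N ×ˢ range N) :
    gridCell N q ⊆ Set.Ico (0 : ℝ) 1 ×ˢ Set.Ico (0 : ℝ) 1 := by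
  have side_subset {k : ℕ} (hk : k ∈ range N) : Set.Ico (k / N : ℝ) ((k + 1) / N) ⊆ Set.Ico 0 1 :=
    Set.Ico_subset_Ico (by positivity)
      (div_le_one_of_le₀ (mod_cast mem_range.mp hk) (by positivity))
  obtain ⟨h₁, h₂⟩ := mem_product.mp hq
  exact Set.prod_mono (side_subset h₁) (side_subset h₂)

theorem sum_indicator_gridCell (hN : 0 < N) {y : ℝ × ℝ}
    (hy : y ∈ Set.Ico (0 : ℝ) 1 ×ˢ Set.Ico (0 : ℝ) 1) (F : ℕ × ℕ → ℝ) :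
    ∑ q ∈ range N ×ˢ range N, (gridCell N q).indicator (fun _ ↦ F q) y =
      F (⌊N * y.1⌋₊, ⌊N * y.2⌋₊) := by
  rw [sum_eq_single_of_mem (⌊N * y.1⌋₊, ⌊N * y.2⌋₊), Set.indicator_of_mem]
  · exact (mem_gridCell_iff hN hy).mpr rfl
  · exact mem_product.mpr
      ⟨mem_range.mpr (floor_mul_lt hN hy.1), mem_range.mpr (floor_mul_lt hN hy.2)⟩
  · exact fun q _ hq ↦ Set.indicator_of_notMem ((mem_gridCell_iff hN hy).not.mpr hq) _

theorem setIntegral_unitSquare_le (hN : 0 < N) (hf : ∀ y, 0 ≤ f y)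
    (hfG : ∀ y ∈ Set.Ico (0 : ℝ) 1 ×ˢ Set.Ico (0 : ℝ) 1, f y ≤ G ⌊N * y.1⌋₊ ⌊N * y.2⌋₊) :
    ∫ y in Set.Ico (0 : ℝ) 1 ×ˢ Set.Ico (0 : ℝ) 1, f y ≤
      (∑ k ∈ range N, ∑ l ∈ range N, G k l) / (N : ℝ) ^ 2 := by
  set square : Set (ℝ × ℝ) := Set.Ico 0 1 ×ˢ Set.Ico 0 1
  have measurable_square : MeasurableSet square := measurableSet_Ico.prod measurableSet_Ico
  have finite_square : volume square ≠ ⊤ := by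
    rw [Measure.volume_eq_prod, Measure.prod_prod]
    simp
  have measure_cell {q : ℕ × ℕ} (hq : q ∈ range N ×ˢ range N) :
      (volume.restrict square).real (gridCell N q) = 1 / (N : ℝ) ^ 2 := by
    rw [measureReal_restrict_apply (measurableSet_gridCell N q),
      Set.inter_eq_left.mpr (gridCell_subset hq), volume_real_gridCell]
  have integrable_cell (q : ℕ × ℕ) :
      IntegrableOn ((gridCell N q).indicator fun _ ↦ G q.1 q.2) square :=
    (integrableOn_const finite_square).indicator (measurableSet_gridCell N q)
  calc ∫ y in square, f y
      ≤ ∫ y in square,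
          ∑ q ∈ range N ×ˢ range N, (gridCell N q).indicator (fun _ ↦ G q.1 q.2) y := by
        refine integral_mono_of_nonneg (ae_of_all _ hf)
          (integrable_finsetSum _ fun q _ ↦ integrable_cell q)
          (ae_restrict_of_forall_mem measurable_square fun y hy ↦ ?_)
        exact (hfG y hy).trans_eq (sum_indicator_gridCell hN hy fun q ↦ G q.1 q.2).symm
    _ = ∑ q ∈ range N ×ˢ range N, 1 / (N : ℝ) ^ 2 * G q.1 q.2 := by
        rw [integral_finsetSum _ fun q _ ↦ integrable_cell q]
        refine sum_congr rfl fun q hq ↦ ?_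
        rw [integral_indicator_const _ (measurableSet_gridCell N q), measure_cell hq, smul_eq_mul]
    _ = (∑ k ∈ range N, ∑ l ∈ range N, G k l) / (N : ℝ) ^ 2 := by
        rw [← mul_sum, sum_product]
        ring

theorem rpow_abs_le_of_abs_le_mul {p σ x g : ℝ} (hp : 0 ≤ p) (hσ : 0 ≤ σ) (hg : 0 ≤ g)
    (hx : |x| ≤ σ * (g + 1)) :
    |x| ^ p ≤ (σ * p) ^ p * Real.exp 1 * Real.exp g := by
  have moment_le := ProbabilityTheory.rpow_abs_le_mul_exp_abs (g + 1) hp one_ne_zero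
  rw [abs_of_nonneg (by positivity : 0 ≤ g + 1), abs_one, div_one, one_mul, add_comm g,
    Real.exp_add] at moment_le
  calc |x| ^ p ≤ (σ * (1 + g)) ^ p := by
        rw [add_comm]
        exact Real.rpow_le_rpow (abs_nonneg _) hx hp
    _ ≤ σ ^ p * (p ^ p * (Real.exp 1 * Real.exp g)) := by
        rw [Real.mul_rpow hσ (by positivity)]
        gcongr
    _ = (σ * p) ^ p * Real.exp 1 * Real.exp g := by
        rw [Real.mul_rpow hσ hp]
        ring

theorem rpow_setIntegral_rpow_le {p σ A : ℝ} (hp : 0 < p) (hσ : 0 ≤ σ) (hN : 0 < N)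
    (hfG : ∀ y ∈ Set.Ico (0 : ℝ) 1 ×ˢ Set.Ico (0 : ℝ) 1,
      |f y| ≤ σ * (|G ⌊N * y.1⌋₊ ⌊N * y.2⌋₊| + 1))
    (hG : ∀ l < N, ∑ k ∈ range N, Real.exp |G k l| ≤ A * N) :
    (∫ y in Set.Ico (0 : ℝ) 1 ×ˢ Set.Ico (0 : ℝ) 1, |f y| ^ p) ^ (1 / p) ≤
      σ * p * (Real.exp 1 * A) ^ (1 / p) := by
  have hN' : (0 : ℝ) < N := Nat.cast_pos.mpr hN
  have hA : 0 ≤ A := nonneg_of_mul_nonneg_left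
    ((sum_nonneg fun _ _ ↦ (Real.exp_pos _).le).trans (hG 0 hN)) hN'
  have integral_le : ∫ y in Set.Ico (0 : ℝ) 1 ×ˢ Set.Ico (0 : ℝ) 1, |f y| ^ p ≤
      (σ * p) ^ p * (Real.exp 1 * A) :=
    calc ∫ y in Set.Ico (0 : ℝ) 1 ×ˢ Set.Ico (0 : ℝ) 1, |f y| ^ p
        ≤ (∑ k ∈ range N, ∑ l ∈ range N, (σ * p) ^ p * Real.exp 1 * Real.exp |G k l|) /
            (N : ℝ) ^ 2 :=
          setIntegral_unitSquare_le (f := fun y ↦ |f y| ^ p)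
            (G := fun k l ↦ (σ * p) ^ p * Real.exp 1 * Real.exp |G k l|) hN
            (fun y ↦ by positivity)
            fun y hy ↦ rpow_abs_le_of_abs_le_mul hp.le hσ (abs_nonneg _) (hfG y hy)
      _ = (σ * p) ^ p * Real.exp 1 * (∑ l ∈ range N, ∑ k ∈ range N, Real.exp |G k l|) /
            (N : ℝ) ^ 2 := by
          simp only [← mul_sum]
          rw [sum_comm]
      _ ≤ (σ * p) ^ p * Real.exp 1 * (∑ _l ∈ range N, A * N) / (N : ℝ) ^ 2 := by
          gcongr with l hl
          exact hG l (mem_range.mp hl)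
      _ = (σ * p) ^ p * (Real.exp 1 * A) := by
          rw [sum_const, card_range, nsmul_eq_mul]
          field_simp
  calc (∫ y in Set.Ico (0 : ℝ) 1 ×ˢ Set.Ico (0 : ℝ) 1, |f y| ^ p) ^ (1 / p)
      ≤ ((σ * p) ^ p * (Real.exp 1 * A)) ^ (1 / p) :=
        Real.rpow_le_rpow (integral_nonneg fun _ ↦ by positivity) integral_le (by positivity)
    _ = σ * p * (Real.exp 1 * A) ^ (1 / p) := by
        rw [Real.mul_rpow (by positivity) (by positivity), ← Real.rpow_mul (by positivity),
          mul_one_div_cancel hp.ne', Real.rpow_one]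

end UnitSquare

theorem lpDisc_digitalNetPoint_le {b m n t : ℕ} [NeZero b] (hb : 2 ≤ b)
    {C₁ C₂ : Matrix (Fin n) (Fin m) (ZMod b)} (hC : IsDickUniform t C₁ C₂) {p : ℝ} (hp : 0 < p)
    (hm : 1 ≤ m) (hmn : m ≤ n) :
    LpDisc p (digitalNetPoint b m n C₁ C₂) ≤
      12 * (b : ℝ) ^ (2 * t + 3) / (b : ℝ) ^ m * √m * p *
        (Real.exp 1 * (2 * Real.exp (3 / 2))) ^ (1 / p) := by
  have one_le_b : (1 : ℝ) ≤ b := Nat.one_le_cast.mpr (Nat.pos_of_neZero b)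
  have one_le_sqrt : 1 ≤ √(m : ℝ) := Real.one_le_sqrt.mpr (Nat.one_le_cast.mpr hm)
  set σ : ℝ := 12 * (b : ℝ) ^ (2 * t + 3) / (b : ℝ) ^ m * √m
  have hσ : 0 < σ := by positivity
  have rounding_le : 4 * (b : ℝ) ^ t / (b : ℝ) ^ m ≤ σ :=
    calc 4 * (b : ℝ) ^ t / (b : ℝ) ^ m
        ≤ 12 * (b : ℝ) ^ (2 * t + 3) / (b : ℝ) ^ m := by gcongr <;> grind
      _ ≤ σ := le_mul_of_one_le_right (by positivity) one_le_sqrt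
  refine rpow_setIntegral_rpow_le (N := b ^ m)
    (G := fun k l ↦ bias C₁ C₂ (anchoredInd m k) (anchoredInd m l) / σ) hp hσ.le
    (pow_pos (Nat.pos_of_neZero b) m) (fun y hy ↦ ?_)
    fun l hl ↦ sum_exp_abs_bias_div_le hb hC hm hmn hl
  rw [discAt_digitalNetPoint, Nat.cast_pow, abs_div, abs_of_pos hσ, mul_add,
    mul_div_cancel₀ _ hσ.ne', mul_one]
  exact (abs_expect_belowInd_sub_mul_le hC hmn hy.1 hy.2).trans (by gcongr)

end DigitalNet

theorem lp_discrepancy_of_min_dick_weight_general (b : ℕ) (hb : 2 ≤ b) (p : ℝ) (hp : 0 < p)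
    (t : ℕ) :
    ∃ C : ℝ, 0 < C ∧ ∀ m n : ℕ, 1 ≤ m → m ≤ n →
      ∀ C1 C2 : Matrix (Fin n) (Fin m) (ZMod b),
        (∀ k1 k2 : ℕ, k1 < b ^ n → k2 < b ^ n →
          Matrix.mulVec C1.transpose (digitVec b n k1) +
            Matrix.mulVec C2.transpose (digitVec b n k2) = 0 →
          ¬(k1 = 0 ∧ k2 = 0) → 2 * m - t < mu2 b k1 + mu2 b k2) →
        LpDisc p (digitalNetPoint b m n C1 C2) ≤ C * Real.sqrt m / (b : ℝ) ^ m := by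
  have : NeZero b := ⟨by lia⟩
  refine ⟨12 * (b : ℝ) ^ (2 * t + 3) * p * (Real.exp 1 * (2 * Real.exp (3 / 2))) ^ (1 / p),
    by positivity, fun m n hm hmn C₁ C₂ hdual ↦ ?_⟩
  have hC : DigitalNet.IsDickUniform t C₁ C₂ := DigitalNet.isDickUniform_of_lt_mu2 hb hdual
  exact (DigitalNet.lpDisc_digitalNetPoint_le hb hC hp hm hmn).trans_eq (by ring)

/-- For every integer `b ≥ 2`, every real `1 ≤ p < ∞` and every
`t ∈ ℕ`, there is a constant `C > 0` (depending only on `b`, `p` and `t`) such that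
for all `m, n ∈ ℕ` with `m ≥ 1`, `t ≤ 2m` and `n ≥ 2m`, and all `n × m` matrices
`C₁, C₂` over `ZMod b` whose dual net only contains pairs `(k₁, k₂) ≠ (0, 0)` with
`μ₂(k₁) + μ₂(k₂) > 2m - t`, the two-dimensional digital net `P` generated by `C₁, C₂`
satisfies `L_p(P) ≤ C · √m / bᵐ`. -/
theorem lp_discrepancy_of_min_dick_weight (b : ℕ) (hb : 2 ≤ b) (p : ℝ) (hp : 1 ≤ p)
    (t : ℕ) :
    ∃ C : ℝ, 0 < C ∧ ∀ m n : ℕ, 1 ≤ m → t ≤ 2 * m → 2 * m ≤ n →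
      ∀ C1 C2 : Matrix (Fin n) (Fin m) (ZMod b),
        (∀ k1 k2 : ℕ, k1 < b ^ n → k2 < b ^ n →
          Matrix.mulVec C1.transpose (digitVec b n k1) +
            Matrix.mulVec C2.transpose (digitVec b n k2) = 0 →
          ¬(k1 = 0 ∧ k2 = 0) → 2 * m - t < mu2 b k1 + mu2 b k2) →
        LpDisc p (digitalNetPoint b m n C1 C2) ≤ C * Real.sqrt m / (b : ℝ) ^ m := by
  obtain ⟨C, hC, hle⟩ :=
    lp_discrepancy_of_min_dick_weight_general b hb p (one_pos.trans_le hp) t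
  exact ⟨C, hC, fun m n hm _ hmn ↦ hle m n hm (by lia)⟩
end
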